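/- arXiv:1209.3381 — 2 statements merged into one kernel-verified Lean document; each statement's English description precedes it below -/
import Mathlib

section
/- Assume: s_{ij}(ω) > 0 for all ω, i, j; ω ↦ ln⁺M(ω) ∈ L₁(ℙ) where M(ω) := max_{i,j} s_{ij}(ω); for each i = 1,…,N the functions ω ↦ ln M_{c,i}(ω) − ln m_{c,i}(ω) and ω ↦ ln M_{r,i}(ω) − ln m_{r,i}(ω) belong to L₁(ℙ); and moreover either ω ↦ ln⁻m_r(ω) ∈ L₁(ℙ) or ω ↦ ln⁻m_c(ω) ∈ L₁(ℙ), where m_r(ω) := min_i Σ_j s_{ij}(ω) and m_c(ω) := min_j Σ_i s_{ij}(ω). Then the generalized principal Lyapunov exponent is finite; equivalently, the ℙ-almost-sure constant limit λ̃₁ := lim_{n→∞} (1/n) ln‖S^{(n)}(ω)‖ (which exists in [−∞, ∞) by the subadditive ergodic theorem) satisfies λ̃₁ > −∞. -/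
open MeasureTheory Matrix Filter

/-- The Euclidean norm on `Fin N → ℝ`. -/
noncomputable def enorm' {N : ℕ} (u : Fin N → ℝ) : ℝ := Real.sqrt (∑ i, (u i) ^ 2)

/-- `ln⁺ x = max (ln x) 0`; `ln⁻ x = max (−ln x) 0`. -/
noncomputable def lnplus (x : ℝ) : ℝ := max (Real.log x) 0

noncomputable def lnminus (x : ℝ) : ℝ := max (-Real.log x) 0

/-- The operator norm of a matrix with respect to the Euclidean norm. -/
noncomputable def eopNorm {N : ℕ} (M : Matrix (Fin N) (Fin N) ℝ) : ℝ :=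
  sSup {c : ℝ | ∃ u : Fin N → ℝ, enorm' u ≤ 1 ∧ c = enorm' (M.mulVec u)}

/-- The cocycle products `S⁽ⁿ⁾(ω) = S(θ^{n-1}ω) ⋯ S(θω) S(ω)`, `S⁽⁰⁾(ω) = Id`. -/
noncomputable def Sprod {Ω : Type*} {N : ℕ} (θ : Equiv.Perm Ω)
    (S : Ω → Matrix (Fin N) (Fin N) ℝ) : ℕ → Ω → Matrix (Fin N) (Fin N) ℝ
  | 0, _ => 1
  | n + 1, ω => Sprod θ S n (θ ω) * S ω


/-- Comparison Birkhoff-type sum. -/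
noncomputable def PhiSum {Ω : Type*} (T : Ω → Ω) (f h : Ω → ℝ) (L : ℕ) : ℕ → Ω → ℝ
  | 0, _ => 0
  | n + 1, ω => (if n + 1 ≤ L then f ω else h ω) + PhiSum T f h L n (T ω)

lemma PhiSum_mono {Ω : Type*} (T : Ω → Ω) (f h : Ω → ℝ) (L : ℕ) (hf : ∀ ω, 0 ≤ f ω)
    (hh : ∀ ω, 0 ≤ h ω) (j n : ℕ) (ω : Ω) :
    PhiSum T f h L n (T^[j] ω) ≤ PhiSum T f h L (n + j) ω := by
  induction j generalizing ω with
  | zero => simp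
  | succ j ih =>
    rw [Function.iterate_succ_apply]
    refine (ih (T ω)).trans ?_
    rw [← add_assoc, PhiSum]
    have := hf ω
    have := hh ω
    split_ifs <;> linarith

lemma PhiSum_integral {Ω : Type*} [MeasurableSpace Ω] {μ : Measure Ω}
    {T : Ω → Ω} (hT : MeasurePreserving T μ μ) {f h : Ω → ℝ} (L : ℕ)
    (hf : ∀ ω, 0 ≤ f ω) (hh : ∀ ω, 0 ≤ h ω) (hfi : Integrable f μ) (hhi : Integrable h μ) (n : ℕ) :
    Integrable (PhiSum T f h L n) μ ∧
      ∫ ω, PhiSum T f h L n ω ∂μ ≤ n * ∫ ω, h ω ∂μ + (min n L : ℕ) * ∫ ω, f ω ∂μ := by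
  have If : 0 ≤ ∫ ω, f ω ∂μ := integral_nonneg hf
  have Ih : 0 ≤ ∫ ω, h ω ∂μ := integral_nonneg hh
  induction n with
  | zero => simp [PhiSum]
  | succ n ih =>
    obtain ⟨i1, i2⟩ := ih
    have i3 : Integrable (fun ω => PhiSum T f h L n (T ω)) μ := hT.integrable_comp_of_integrable i1
    have e : ∫ ω, PhiSum T f h L n (T ω) ∂μ = ∫ ω, PhiSum T f h L n ω ∂μ := by
      have := hT.map_eq
      conv_rhs => rw [← this]
      rw [integral_map hT.measurable.aemeasurable]
      rw [this]; exact i1.aestronglyMeasurable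
    by_cases hL : n + 1 ≤ L
    · have : PhiSum T f h L (n+1) = fun ω => f ω + PhiSum T f h L n (T ω) := by
        funext ω; simp [PhiSum, hL]
      rw [this, integral_add hfi i3, e]
      refine ⟨hfi.add i3, ?_⟩
      rw [min_eq_left (by omega)] at i2 ⊢
      push_cast
      nlinarith
    · have : PhiSum T f h L (n+1) = fun ω => h ω + PhiSum T f h L n (T ω) := by
        funext ω; simp [PhiSum, hL]
      rw [this, integral_add hhi i3, e]
      refine ⟨hhi.add i3, ?_⟩
      rw [min_eq_right (by omega)] at i2 ⊢
      push_cast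
      nlinarith

lemma le_PhiSum {Ω : Type*} (T : Ω → Ω) (a : ℕ → Ω → ℝ)
    (hsub : ∀ m n, 1 ≤ m → 1 ≤ n → ∀ ω, a (m + n) ω ≤ a m ω + a n (T^[m] ω))
    (f h : Ω → ℝ) (L : ℕ) (hf : ∀ ω, 0 ≤ f ω) (hh : ∀ ω, 0 ≤ h ω)
    (hfa : ∀ ω, a 1 ω ≤ f ω)
    (hha : ∀ ω, (∀ j, 1 ≤ j → j ≤ L → 0 < a j ω) → a 1 ω ≤ h ω) (n : ℕ) :
    1 ≤ n → ∀ ω, a n ω ≤ PhiSum T f h L n ω := by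
  induction n using Nat.strong_induction_on with
  | _ n ih =>
  intro hn ω
  obtain ⟨n, rfl⟩ : ∃ k, n = k + 1 := ⟨n - 1, by omega⟩
  have step : ∀ g, a 1 ω ≤ g → a (n+1) ω ≤ g + PhiSum T f h L n (T ω) := by
    intro g hg
    rcases Nat.eq_zero_or_pos n with rfl | hn0
    · simpa [PhiSum] using hg
    · have h1 := hsub 1 n le_rfl hn0 ω
      have h2 := ih n (by omega) hn0 (T ω)
      rw [add_comm 1 n] at h1
      simp only [Function.iterate_one] at h1
      linarith
  by_cases hL : n + 1 ≤ L
  · simpa [PhiSum, hL] using step _ (hfa ω)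
  · by_cases hB : ∀ j, 1 ≤ j → j ≤ L → 0 < a j ω
    · simpa [PhiSum, hL] using step _ (hha ω hB)
    · push Not at hB
      obtain ⟨j, hj1, hjL, hj⟩ := hB
      have h1 := hsub j (n + 1 - j) hj1 (by omega) ω
      have h2 := ih (n + 1 - j) (by omega) (by omega) (T^[j] ω)
      have h3 := PhiSum_mono T f h L hf hh j (n + 1 - j) ω
      rw [show j + (n + 1 - j) = n + 1 by omega] at h1
      rw [show n + 1 - j + j = n + 1 by omega] at h3
      linarith

/-- key maximal type lemma -/
lemma key_lemma {Ω : Type*} [MeasurableSpace Ω] {μ : Measure Ω} [IsProbabilityMeasure μ]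
    {T : Ω → Ω} (hT : MeasurePreserving T μ μ) (a : ℕ → Ω → ℝ)
    (ham : ∀ n, Measurable (a n)) (hai : ∀ n, 1 ≤ n → Integrable (a n) μ)
    (hsub : ∀ m n, 1 ≤ m → 1 ≤ n → ∀ ω, a (m + n) ω ≤ a m ω + a n (T^[m] ω))
    (hneg : ∀ᵐ ω ∂μ, ∃ n, 1 ≤ n ∧ a n ω ≤ 0) (δ : ℝ) (hδ : 0 < δ) :
    ∃ n : ℕ, 1 ≤ n ∧ ∫ ω, a n ω ∂μ < δ * n := by
  set B : ℕ → Set Ω := fun L => {ω | ∀ j, 1 ≤ j → j ≤ L → 0 < a j ω} with hB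
  have hBm : ∀ L, MeasurableSet (B L) := by
    intro L
    have : B L = ⋂ j, ⋂ (_ : 1 ≤ j), ⋂ (_ : j ≤ L), {ω | 0 < a j ω} := by
      ext ω; simp [hB]
    rw [this]
    exact MeasurableSet.iInter fun j => MeasurableSet.iInter fun _ => MeasurableSet.iInter fun _ =>
      measurableSet_lt measurable_const (ham j)
  set f : Ω → ℝ := fun ω => max (a 1 ω) 0 with hf
  have hfi : Integrable f μ := (hai 1 le_rfl).pos_part
  have hf0 : ∀ ω, 0 ≤ f ω := fun ω => le_max_right _ _
  have hlim : Tendsto (fun L => ∫ ω, (B L).indicator f ω ∂μ) atTop (nhds (∫ ω, (0:ℝ) ∂μ)) := by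
    refine tendsto_integral_of_dominated_convergence f ?_ hfi ?_ ?_
    · intro L; exact (hfi.indicator (hBm L)).aestronglyMeasurable
    · intro L
      refine Eventually.of_forall fun ω => ?_
      by_cases h : ω ∈ B L
      · simp [h, abs_of_nonneg (hf0 ω)]
      · simp [h, hf0 ω]
    · filter_upwards [hneg] with ω ⟨n, hn, hna⟩
      refine tendsto_const_nhds.congr' ?_
      filter_upwards [eventually_ge_atTop n] with L hL
      rw [Set.indicator_of_notMem]
      intro h
      exact absurd (h n hn hL) (not_lt.2 hna)
  simp only [integral_zero] at hlim
  obtain ⟨L, hL⟩ := (hlim.eventually (gt_mem_nhds (half_pos hδ))).exists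
  set h : Ω → ℝ := (B L).indicator f with hh
  have hhi : Integrable h μ := hfi.indicator (hBm L)
  have hh0 : ∀ ω, 0 ≤ h ω := fun ω => Set.indicator_nonneg (fun x _ => hf0 x) ω
  obtain ⟨n, hn⟩ := exists_nat_gt (L * (∫ ω, f ω ∂μ) / (δ / 2))
  have If : 0 ≤ ∫ ω, f ω ∂μ := integral_nonneg hf0
  refine ⟨n + 1, by omega, ?_⟩
  have hle := le_PhiSum T a hsub f h L hf0 hh0 (fun ω => le_max_left _ _) (by
    intro ω hω
    rw [hh, Set.indicator_of_mem (show ω ∈ B L from hω)]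
    exact le_max_left _ _) (n+1) (by omega)
  obtain ⟨p1, p2⟩ := PhiSum_integral hT L hf0 hh0 hfi hhi (n+1)
  have h1 := integral_mono (hai (n+1) (by omega)) p1 hle
  rw [div_lt_iff₀ (half_pos hδ)] at hn
  have h3 : ((min (n+1) L : ℕ) : ℝ) ≤ L := by exact_mod_cast min_le_right _ _
  have h4 := mul_le_mul_of_nonneg_right h3 If
  have h5 : ((n+1 : ℕ) : ℝ) * ∫ ω, h ω ∂μ ≤ (n+1 : ℕ) * (δ/2) := by gcongr
  push_cast at *
  linarith

lemma kingman_lower {Ω : Type*} [MeasurableSpace Ω] {μ : Measure Ω} [IsProbabilityMeasure μ]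
    {T : Ω → Ω} (hT : Ergodic T μ) (a : ℕ → Ω → ℝ)
    (ham : ∀ n, Measurable (a n)) (hai : ∀ n, 1 ≤ n → Integrable (a n) μ)
    (hsub : ∀ m n, 1 ≤ m → 1 ≤ n → ∀ ω, a (m + n) ω ≤ a m ω + a n (T^[m] ω))
    (γ : ℝ) (hγ : ∀ n : ℕ, 1 ≤ n → γ * n ≤ ∫ ω, a n ω ∂μ) (c : ℝ) (hc : c < γ) :
    ∀ᵐ ω ∂μ, ∀ᶠ n : ℕ in atTop, c * n < a n ω := by
  set E : Set Ω := {ω | ∀ q : ℚ, c < q → ∃ᶠ n : ℕ in atTop, a n ω ≤ q * n} with hE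
  have hEm : MeasurableSet E := by
    have : E = ⋂ q : ℚ, ⋂ (_ : c < q), ⋂ k : ℕ, ⋃ n : ℕ, ⋃ (_ : k ≤ n), {ω | a n ω ≤ q * n} := by
      ext ω; simp [hE, frequently_atTop]
    rw [this]
    exact MeasurableSet.iInter fun q => MeasurableSet.iInter fun _ => MeasurableSet.iInter fun _ =>
      MeasurableSet.iUnion fun n => MeasurableSet.iUnion fun _ =>
      measurableSet_le (ham n) measurable_const
  have hinv : T ⁻¹' E ⊆ E := by
    intro ω hω q hq
    obtain ⟨r, hr1, hr2⟩ := exists_rat_btwn hq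
    have h1 := hω r hr1
    have h2 : ∀ᶠ n : ℕ in atTop, a 1 ω + r * n ≤ q * (n + 1) ∧ 1 ≤ n := by
      obtain ⟨k, hk⟩ := exists_nat_gt ((a 1 ω - q) / (q - r))
      filter_upwards [eventually_ge_atTop k, eventually_ge_atTop 1] with n hn hn1
      rw [div_lt_iff₀ (sub_pos.2 hr2)] at hk
      have : (k:ℝ) ≤ n := by exact_mod_cast hn
      refine ⟨?_, hn1⟩
      nlinarith [sub_pos.2 hr2]
    have h3 := h1.and_eventually h2
    rw [frequently_atTop] at h3 ⊢
    intro k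
    obtain ⟨n, hn, h4, h5, h6⟩ := h3 k
    refine ⟨n + 1, by omega, ?_⟩
    have h7 := hsub 1 n le_rfl h6 ω
    rw [add_comm 1 n, Function.iterate_one] at h7
    push_cast
    linarith
  rcases hT.ae_empty_or_univ_of_preimage_ae_le hEm.nullMeasurableSet
    (LE.le.eventuallyLE hinv) with h0 | h1
  · have : ∀ᵐ ω ∂μ, ω ∉ E := by
      filter_upwards [h0] with ω hω hωE
      have : (ω ∈ E) = (ω ∈ (∅ : Set Ω)) := hω
      simp [this] at hωE
    filter_upwards [this] with ω hω
    simp only [hE, Set.mem_ofPred_eq, not_forall, not_frequently] at hω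
    obtain ⟨q, hq, h⟩ := hω
    filter_upwards [h] with n hn
    push Not at hn
    refine lt_of_le_of_lt ?_ hn
    gcongr
  · exfalso
    obtain ⟨q, hq1, hq2⟩ := exists_rat_btwn hc
    obtain ⟨n, hn, h⟩ := key_lemma hT.toMeasurePreserving (fun n ω => a n ω - q * n)
      (fun n => (ham n).sub_const _) (fun n hn => (hai n hn).sub (integrable_const _))
      (by intro m n hm hn ω
          have := hsub m n hm hn ω
          push_cast
          linarith)
      (by
        filter_upwards [h1] with ω hω
        have hωE : ω ∈ E := by
          have : (ω ∈ E) = (ω ∈ (Set.univ : Set Ω)) := hω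
          rw [this]; trivial
        obtain ⟨n, hn, h⟩ := (frequently_atTop.1 (hωE q hq1)) 1
        exact ⟨n, hn, by linarith⟩) (γ - q) (by linarith)
    rw [integral_sub (hai n hn) (integrable_const _)] at h
    simp only [integral_const, probReal_univ, one_smul] at h
    have := hγ n hn
    linarith

lemma error_small {Ω : Type*} [MeasurableSpace Ω] {μ : Measure Ω} [IsProbabilityMeasure μ]
    {T : Ω → Ω} (hT : MeasurePreserving T μ μ) (k : Ω → ℝ) (hkm : Measurable k)
    (hk : Integrable k μ) (ε : ℝ) (hε : 0 < ε) :
    ∀ᵐ ω ∂μ, ∀ᶠ n : ℕ in atTop, k (T^[n] ω) ≤ ε * n := by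
  have hX : Integrable (fun ω => |k ω| / ε) μ := hk.abs.div_const ε
  let _ : MeasureSpace Ω := ⟨μ⟩
  have h := ProbabilityTheory.tsum_prob_mem_Ioi_lt_top (Ω := Ω) (X := fun ω => |k ω| / ε) hX
    (fun ω => by positivity)
  have h2 : ∑' n : ℕ, μ {ω | |k (T^[n] ω)| / ε ∈ Set.Ioi (n:ℝ)} ≠ ⊤ := by
    refine ne_of_lt (lt_of_le_of_lt (le_of_eq ?_) h)
    congr 1
    funext n
    have hm : MeasurableSet {ω | |k ω| / ε ∈ Set.Ioi (n:ℝ)} :=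
      measurableSet_lt measurable_const (hkm.abs.div_const ε)
    exact (hT.iterate n).measure_preimage hm.nullMeasurableSet
  filter_upwards [ae_eventually_notMem h2] with ω hω
  filter_upwards [hω] with n hn
  simp only [Set.mem_Ioi, not_lt] at hn
  rw [div_le_iff₀ hε] at hn
  have := le_abs_self (k (T^[n] ω))
  linarith

theorem almost_additive {Ω : Type*} [MeasurableSpace Ω] {μ : Measure Ω} [IsProbabilityMeasure μ]
    {T : Ω → Ω} (hT : Ergodic T μ) (a : ℕ → Ω → ℝ) (k : Ω → ℝ)
    (ham : ∀ n, Measurable (a n)) (hai : Integrable (a 1) μ)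
    (hkm : Measurable k) (hk : Integrable (fun ω => k ω) μ)
    (hsub : ∀ m n, 1 ≤ m → 1 ≤ n → ∀ ω, a (m + n) ω ≤ a m ω + a n (T^[m] ω))
    (hsup : ∀ m n, 1 ≤ m → 1 ≤ n → ∀ ω,
      a m ω + a n (T^[m] ω) - k (T^[m] ω) ≤ a (m + n) ω) :
    ∃ γ : ℝ, ∀ᵐ ω ∂μ, Tendsto (fun n : ℕ => (n:ℝ)⁻¹ * a n ω) atTop (nhds γ) := by
  have hTm := hT.toMeasurePreserving
  have inte : ∀ (m : ℕ) (f : Ω → ℝ), Integrable f μ →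
      Integrable (fun ω => f (T^[m] ω)) μ ∧ ∫ ω, f (T^[m] ω) ∂μ = ∫ ω, f ω ∂μ := by
    intro m f hf
    have hm := hTm.iterate m
    refine ⟨hm.integrable_comp_of_integrable hf, ?_⟩
    conv_rhs => rw [← hm.map_eq]
    rw [integral_map hm.measurable.aemeasurable]
    rw [hm.map_eq]; exact hf.aestronglyMeasurable
  have haint : ∀ n, 1 ≤ n → Integrable (a n) μ := by
    intro n hn
    induction n, hn using Nat.le_induction with
    | base => exact hai
    | succ n hn ih =>
      have i1 := (inte 1 _ ih).1
      have i2 := (inte 1 _ hk).1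
      refine Integrable.mono' ((hai.abs.add i1.abs).add i2.abs) (ham _).aestronglyMeasurable ?_
      refine Eventually.of_forall fun ω => ?_
      have h1 := hsub 1 n le_rfl hn ω
      have h2 := hsup 1 n le_rfl hn ω
      rw [add_comm 1 n] at h1 h2
      simp only [Pi.add_apply, Real.norm_eq_abs]
      have := neg_abs_le (a 1 ω)
      have := le_abs_self (a 1 ω)
      have := neg_abs_le (a n (T^[1] ω))
      have := le_abs_self (a n (T^[1] ω))
      have := le_abs_self (k (T^[1] ω))
      have := abs_nonneg (k (T^[1] ω))
      rw [abs_le]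
      constructor <;> linarith
  set b : ℕ → Ω → ℝ := fun n ω => - a n ω + k (T^[n] ω) with hb
  have hbm : ∀ n, Measurable (b n) := fun n =>
    (ham n).neg.add (hkm.comp (hTm.iterate n).measurable)
  have hbi : ∀ n, 1 ≤ n → Integrable (b n) μ := fun n hn => (haint n hn).neg.add (inte n _ hk).1
  have hbsub : ∀ m n, 1 ≤ m → 1 ≤ n → ∀ ω, b (m + n) ω ≤ b m ω + b n (T^[m] ω) := by
    intro m n hm hn ω
    have h := hsup m n hm hn ω
    simp only [hb]
    rw [← Function.iterate_add_apply, add_comm n m]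
    linarith
  set K := ∫ ω, k ω ∂μ with hK
  have hbI : ∀ n, 1 ≤ n → ∫ ω, b n ω ∂μ = - (∫ ω, a n ω ∂μ) + K := by
    intro n hn
    simp only [hb]
    have hneg : Integrable (fun ω => - a n ω) μ := (haint n hn).neg
    rw [integral_add hneg (inte n _ hk).1, (inte n _ hk).2]
    simp only [integral_neg, hK]
  have hsubI : ∀ a : ℕ → Ω → ℝ, (∀ n, 1 ≤ n → Integrable (a n) μ) →
      (∀ m n, 1 ≤ m → 1 ≤ n → ∀ ω, a (m + n) ω ≤ a m ω + a n (T^[m] ω)) →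
      ∀ m n, 1 ≤ m → 1 ≤ n → ∫ ω, a (m+n) ω ∂μ ≤ ∫ ω, a m ω ∂μ + ∫ ω, a n ω ∂μ := by
    intro a ha hs m n hm hn
    have h1 := (inte m _ (ha n hn))
    rw [← h1.2, ← integral_add (ha m hm) h1.1]
    exact integral_mono (ha _ (by omega)) ((ha m hm).add h1.1) (hs m n hm hn)
  set u : ℕ → ℝ := fun n => if n = 0 then 0 else ∫ ω, a n ω ∂μ with hu
  set v : ℕ → ℝ := fun n => if n = 0 then 0 else ∫ ω, b n ω ∂μ with hv
  have hgen : ∀ a : ℕ → Ω → ℝ, (∀ n, 1 ≤ n → Integrable (a n) μ) →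
      (∀ m n, 1 ≤ m → 1 ≤ n → ∀ ω, a (m + n) ω ≤ a m ω + a n (T^[m] ω)) →
      Subadditive (fun n : ℕ => if n = 0 then 0 else ∫ ω, a n ω ∂μ) := by
    intro a ha hs m n
    rcases Nat.eq_zero_or_pos m with rfl | hm
    · simp
    rcases Nat.eq_zero_or_pos n with rfl | hn
    · simp
    have := hsubI a ha hs m n hm hn
    simpa [hm.ne', hn.ne'] using this
  have su : Subadditive u := hgen a haint hsub
  have sv : Subadditive v := hgen b hbi hbsub
  have lin : ∀ w : ℕ → ℝ, Subadditive w → w 0 = 0 → ∀ n : ℕ, w n ≤ n * w 1 := by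
    intro w hw h0 n
    induction n with
    | zero => simp [h0]
    | succ n ih => have := hw n 1; push_cast; linarith
  have hu1 := lin u su (by simp [hu])
  have hv1 := lin v sv (by simp [hv])
  have huv : ∀ n, 1 ≤ n → v n = - u n + K := by
    intro n hn
    simp only [hu, hv, if_neg (show n ≠ 0 by omega)]
    exact hbI n hn
  have bdd : ∀ w : ℕ → ℝ, (∃ C, ∀ n : ℕ, 1 ≤ n → -(C * n) ≤ w n) →
      BddBelow (Set.range fun n : ℕ => w n / n) := by
    rintro w ⟨C, hC⟩
    refine ⟨min 0 (-C), ?_⟩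
    rintro _ ⟨n, rfl⟩
    rcases Nat.eq_zero_or_pos n with rfl | hn
    · simp
    · refine (min_le_right _ _).trans ?_
      have : (0:ℝ) < n := by exact_mod_cast hn
      simp only
      rw [le_div_iff₀ this]
      have := hC n hn
      linarith
  have bu : BddBelow (Set.range fun n : ℕ => u n / n) := by
    refine bdd u ⟨v 1 + |K|, fun n hn => ?_⟩
    have h1 := hv1 n
    rw [huv n hn] at h1
    have : (1:ℝ) ≤ n := by exact_mod_cast hn
    have := neg_abs_le K
    have := abs_nonneg K
    nlinarith
  have bv : BddBelow (Set.range fun n : ℕ => v n / n) := by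
    refine bdd v ⟨u 1 + |K|, fun n hn => ?_⟩
    have h1 := hu1 n
    rw [huv n hn]
    have : (1:ℝ) ≤ n := by exact_mod_cast hn
    have := neg_abs_le K
    have := abs_nonneg K
    nlinarith
  set γ := su.lim with hγ
  have hγv : sv.lim = - γ := by
    have t1 := su.tendsto_lim bu
    have t2 := sv.tendsto_lim bv
    have t3 : Tendsto (fun n : ℕ => -(u n / n) + K / n) atTop (nhds (-γ + 0)) :=
      t1.neg.add (tendsto_const_div_atTop_nhds_zero_nat K)
    rw [add_zero] at t3
    refine tendsto_nhds_unique t2 (t3.congr' ?_)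
    filter_upwards [eventually_ge_atTop 1] with n hn
    rw [huv n hn]; ring
  have lo : ∀ n : ℕ, 1 ≤ n → γ * n ≤ ∫ ω, a n ω ∂μ := by
    intro n hn
    have h := su.lim_le_div bu (n := n) (by omega)
    have : (0:ℝ) < n := by exact_mod_cast hn
    rw [le_div_iff₀ this] at h
    simpa [hu, (show n ≠ 0 by omega)] using h
  have lov : ∀ n : ℕ, 1 ≤ n → (-γ) * n ≤ ∫ ω, b n ω ∂μ := by
    intro n hn
    have h := sv.lim_le_div bv (n := n) (by omega)
    have : (0:ℝ) < n := by exact_mod_cast hn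
    rw [le_div_iff₀ this, hγv] at h
    simpa [hv, (show n ≠ 0 by omega)] using h
  refine ⟨γ, ?_⟩
  have e1 : ∀ᵐ ω ∂μ, ∀ j : ℕ, ∀ᶠ n : ℕ in atTop, (γ - 1/((j:ℝ)+1)) * n < a n ω := by
    rw [ae_all_iff]; intro j
    refine kingman_lower hT a ham haint hsub γ lo _ ?_
    have : (0:ℝ) < 1/((j:ℝ)+1) := by positivity
    linarith
  have e2 : ∀ᵐ ω ∂μ, ∀ j : ℕ, ∀ᶠ n : ℕ in atTop, (-γ - 1/((j:ℝ)+1)) * n < b n ω := by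
    rw [ae_all_iff]; intro j
    refine kingman_lower hT b hbm hbi hbsub (-γ) lov _ ?_
    have : (0:ℝ) < 1/((j:ℝ)+1) := by positivity
    linarith
  have e3 : ∀ᵐ ω ∂μ, ∀ j : ℕ, ∀ᶠ n : ℕ in atTop, k (T^[n] ω) ≤ 1/((j:ℝ)+1) * n := by
    rw [ae_all_iff]; intro j
    exact error_small hTm k hkm hk _ (by positivity)
  filter_upwards [e1, e2, e3] with ω h1 h2 h3
  rw [Metric.tendsto_atTop']
  intro ε hε
  obtain ⟨j, hj⟩ := exists_nat_one_div_lt (half_pos hε)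
  have h4 := (((h1 j).and (h2 j)).and (h3 j)).and (eventually_ge_atTop 1)
  obtain ⟨n0, hn0⟩ := eventually_atTop.1 h4
  refine ⟨n0, fun n hn => ?_⟩
  obtain ⟨⟨⟨q1, q2⟩, q3⟩, q4⟩ := hn0 n hn.le
  have np : (0:ℝ) < n := by exact_mod_cast q4
  simp only [hb] at q2
  have r1 : 1/((j:ℝ)+1) * n < ε/2 * n := by gcongr
  rw [Real.dist_eq, abs_lt, inv_mul_eq_div, lt_sub_iff_add_lt, sub_lt_iff_lt_add,
    lt_div_iff₀ np, div_lt_iff₀ np]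
  constructor <;> nlinarith

noncomputable def tot {N : ℕ} (M : Matrix (Fin N) (Fin N) ℝ) : ℝ := ∑ i, ∑ j, M i j

lemma tot_mul {N : ℕ} (A B : Matrix (Fin N) (Fin N) ℝ) :
    tot (A * B) = ∑ j, (∑ i, A i j) * (∑ l, B j l) := by
  unfold tot
  simp only [Matrix.mul_apply, Finset.sum_mul, Finset.mul_sum]
  calc _ = ∑ i, ∑ j, ∑ l, A i j * B j l := by
        refine Finset.sum_congr rfl fun i _ => Finset.sum_comm
    _ = ∑ j, ∑ i, ∑ l, A i j * B j l := Finset.sum_comm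
    _ = _ := by
        refine Finset.sum_congr rfl fun i _ => Finset.sum_comm

lemma tot_swap {N : ℕ} (A : Matrix (Fin N) (Fin N) ℝ) :
    tot A = ∑ j, ∑ i, A i j := Finset.sum_comm

lemma tot_mul_le {N : ℕ} (A B : Matrix (Fin N) (Fin N) ℝ) (hA : ∀ i j, 0 ≤ A i j)
    (hB : ∀ i j, 0 ≤ B i j) : tot (A * B) ≤ tot A * tot B := by
  rw [tot_mul, tot_swap A, Finset.sum_mul]
  refine Finset.sum_le_sum fun j _ => ?_
  refine mul_le_mul_of_nonneg_left ?_ (Finset.sum_nonneg fun i _ => hA i j)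
  exact Finset.single_le_sum (f := fun j => ∑ l, B j l)
    (fun i _ => Finset.sum_nonneg fun l _ => hB i l) (Finset.mem_univ j)

lemma tot_mul_ge {N : ℕ} (A B T : Matrix (Fin N) (Fin N) ℝ) (hA : ∀ i j, 0 ≤ A i j)
    (hB : ∀ i j, 0 ≤ B i j) (κ : ℝ) (hT : ∀ l j k, T l k ≤ κ * T j k) :
    tot A * tot (T * B) ≤ N * κ * tot (A * (T * B)) := by
  rw [tot_mul A, tot_swap A, Finset.sum_mul, Finset.mul_sum]
  refine Finset.sum_le_sum fun j _ => ?_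
  have key : ∀ l, ∑ m, (T * B) l m ≤ κ * ∑ m, (T * B) j m := by
    intro l
    simp only [Matrix.mul_apply, Finset.mul_sum]
    refine Finset.sum_le_sum fun m _ => Finset.sum_le_sum fun k _ => ?_
    rw [← mul_assoc]
    exact mul_le_mul_of_nonneg_right (hT l j k) (hB k m)
  have h2 : tot (T * B) ≤ N * κ * ∑ m, (T * B) j m := by
    unfold tot
    refine (Finset.sum_le_sum fun l _ => key l).trans (le_of_eq ?_)
    simp [mul_assoc]
  have h3 : 0 ≤ ∑ i, A i j := Finset.sum_nonneg fun i _ => hA i j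
  calc _ ≤ (∑ i, A i j) * (N * κ * ∑ m, (T * B) j m) := mul_le_mul_of_nonneg_left h2 h3
    _ = _ := by ring

lemma enorm'_le {N : ℕ} (u : Fin N → ℝ) : enorm' u ≤ ∑ i, |u i| := by
  unfold enorm'
  refine Real.sqrt_le_iff.2 ⟨Finset.sum_nonneg fun i _ => abs_nonneg _, ?_⟩
  simp_rw [← sq_abs (u _)]
  exact Finset.sum_sq_le_sq_sum_of_nonneg fun i _ => abs_nonneg _

lemma abs_le_enorm' {N : ℕ} (u : Fin N → ℝ) (i : Fin N) : |u i| ≤ enorm' u := by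
  unfold enorm'
  refine Real.abs_le_sqrt ?_
  exact Finset.single_le_sum (f := fun i => (u i)^2) (fun i _ => sq_nonneg _) (Finset.mem_univ i)

lemma eop_bound {N : ℕ} (M : Matrix (Fin N) (Fin N) ℝ) (hM : ∀ i j, 0 ≤ M i j) (u : Fin N → ℝ)
    (hu : enorm' u ≤ 1) : enorm' (M.mulVec u) ≤ tot M := by
  refine (enorm'_le _).trans (Finset.sum_le_sum fun i _ => ?_)
  simp only [Matrix.mulVec, dotProduct]
  refine (Finset.abs_sum_le_sum_abs _ _).trans (Finset.sum_le_sum fun j _ => ?_)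
  rw [abs_mul, abs_of_nonneg (hM i j)]
  exact mul_le_of_le_one_right (hM i j) ((abs_le_enorm' u j).trans hu)

lemma eop_le {N : ℕ} (M : Matrix (Fin N) (Fin N) ℝ) (hM : ∀ i j, 0 ≤ M i j) :
    eopNorm M ≤ tot M := by
  refine csSup_le ⟨_, 0, by simp [enorm'], rfl⟩ ?_
  rintro c ⟨u, hu, rfl⟩
  exact eop_bound M hM u hu

lemma le_eop {N : ℕ} (M : Matrix (Fin N) (Fin N) ℝ) (hM : ∀ i j, 0 ≤ M i j) :
    tot M ≤ (N:ℝ)^2 * eopNorm M := by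
  have h : ∀ i j, M i j ≤ eopNorm M := by
    intro i j
    have h1 : enorm' (M.mulVec (Pi.single j 1)) ≤ eopNorm M := by
      refine le_csSup ⟨tot M, ?_⟩ ⟨Pi.single j 1, ?_, rfl⟩
      · rintro c ⟨u, hu, rfl⟩
        exact eop_bound M hM u hu
      · refine (enorm'_le _).trans (le_of_eq ?_)
        rw [Finset.sum_eq_single j] <;> simp +contextual [Pi.single_apply]
    refine le_trans ?_ h1
    refine le_trans ?_ (abs_le_enorm' _ i)
    simp [le_abs_self]
  unfold tot
  refine (Finset.sum_le_sum fun i _ => Finset.sum_le_sum fun j _ => h i j).trans (le_of_eq ?_)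
  simp; ring

section
variable {Ω : Type*} {N : ℕ} (θ : Equiv.Perm Ω) (S : Ω → Matrix (Fin N) (Fin N) ℝ)

lemma Sprod_add (m n : ℕ) (ω : Ω) :
    Sprod θ S (m + n) ω = Sprod θ S n (θ^[m] ω) * Sprod θ S m ω := by
  induction m generalizing ω with
  | zero => simp [Sprod]
  | succ m ih =>
    rw [show m + 1 + n = (m + n) + 1 by ring, Sprod, ih, Sprod, Function.iterate_succ_apply,
      Matrix.mul_assoc]

lemma Sprod_nonneg (hS : ∀ ω i j, 0 < S ω i j) (n : ℕ) (ω : Ω) (i j : Fin N) :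
    0 ≤ Sprod θ S n ω i j := by
  induction n generalizing ω i j with
  | zero => simp only [Sprod, Matrix.one_apply]; split_ifs <;> norm_num
  | succ n ih =>
    rw [Sprod, Matrix.mul_apply]
    exact Finset.sum_nonneg fun k _ => mul_nonneg (ih _ _ _) (hS _ _ _).le

lemma Sprod_tot_pos (hN : 2 ≤ N) (hS : ∀ ω i j, 0 < S ω i j) (n : ℕ) (ω : Ω) :
    0 < tot (Sprod θ S n ω) := by
  haveI : Nonempty (Fin N) := ⟨⟨0, by omega⟩⟩
  induction n generalizing ω with
  | zero =>
    simp only [Sprod, tot, Matrix.one_apply]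
    simp; omega
  | succ n ih =>
    rw [Sprod, tot_mul]
    have h0 := ih (θ ω)
    rw [tot_swap] at h0
    obtain ⟨j, hj, hpos⟩ := Finset.exists_lt_of_sum_lt (s := Finset.univ) (f := fun _ => (0:ℝ))
      (g := fun j => ∑ i, Sprod θ S n (θ ω) i j) (by simpa using h0)
    refine Finset.sum_pos' (fun j _ => mul_nonneg
      (Finset.sum_nonneg fun i _ => Sprod_nonneg θ S hS _ _ _ _)
      (Finset.sum_nonneg fun i _ => (hS _ _ _).le)) ⟨j, hj, mul_pos hpos ?_⟩
    exact Finset.sum_pos (fun i _ => hS _ _ _) Finset.univ_nonempty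

lemma Sprod_meas [MeasurableSpace Ω] (hθ : Measurable θ) (hSm : ∀ i j, Measurable fun ω => S ω i j)
    (n : ℕ) (i j : Fin N) : Measurable fun ω => Sprod θ S n ω i j := by
  induction n generalizing i j with
  | zero => simp only [Sprod]; exact measurable_const
  | succ n ih =>
    simp only [Sprod, Matrix.mul_apply]
    exact Finset.measurable_sum _ fun k _ => ((ih i k).comp hθ).mul (hSm k j)

end

theorem stmt_10 {N : ℕ} (hN : 2 ≤ N)
    {Ω : Type*} [MeasurableSpace Ω] (ℙ : Measure Ω) [IsProbabilityMeasure ℙ]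
    (θ : Equiv.Perm Ω) (hθmeas : Measurable θ) (hθinvmeas : Measurable θ.symm)
    (hθmp : MeasurePreserving θ ℙ ℙ) (hθerg : Ergodic (θ : Ω → Ω) ℙ)
    (S : Ω → Matrix (Fin N) (Fin N) ℝ)
    (hSmeas : ∀ i j, Measurable fun ω => S ω i j)
    (hSpos : ∀ ω i j, 0 < S ω i j)
    (hMint : Integrable (fun ω => lnplus (⨆ i, ⨆ j, S ω i j)) ℙ)
    (hcol : ∀ i : Fin N, Integrable (fun ω =>
      Real.log (⨆ j, S ω j i) - Real.log (⨅ j, S ω j i)) ℙ)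
    (hrow : ∀ i : Fin N, Integrable (fun ω =>
      Real.log (⨆ j, S ω i j) - Real.log (⨅ j, S ω i j)) ℙ)
    (hstrongpos :
      Integrable (fun ω => lnminus (⨅ i, ∑ j, S ω i j)) ℙ ∨
      Integrable (fun ω => lnminus (⨅ j, ∑ i, S ω i j)) ℙ) :
    ∃ lam : ℝ, ∀ᵐ ω ∂ℙ,
      Tendsto (fun n : ℕ => (n : ℝ)⁻¹ * Real.log (eopNorm (Sprod θ S n ω)))
        atTop (nhds lam) := by
  haveI : Nonempty (Fin N) := ⟨⟨0, by omega⟩⟩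
  have hN0 : (0:ℝ) < N := by exact_mod_cast (show 0 < N by omega)
  set a : ℕ → Ω → ℝ := fun n ω => Real.log (tot (Sprod θ S n ω)) with ha
  have hpos := Sprod_tot_pos θ S hN hSpos
  have hnn := Sprod_nonneg θ S hSpos
  set κ : Ω → ℝ := fun ω => ∑ i, (Real.log (⨆ j, S ω j i) - Real.log (⨅ j, S ω j i)) with hκ
  have bdA : ∀ f : Fin N → ℝ, BddAbove (Set.range f) := fun f => (Set.finite_range f).bddAbove
  have bdB : ∀ f : Fin N → ℝ, BddBelow (Set.range f) := fun f => (Set.finite_range f).bddBelow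
  have infpos : ∀ f : Fin N → ℝ, (∀ i, 0 < f i) → 0 < ⨅ i, f i := by
    intro f hf
    obtain ⟨i, hi⟩ := exists_eq_ciInf_of_finite (f := f)
    rw [← hi]; exact hf i
  have hratio : ∀ ω l j k, S ω l k ≤ Real.exp (κ ω) * S ω j k := by
    intro ω l j k
    have g : ∀ i l j, Real.log (S ω l i) - Real.log (S ω j i) ≤
        Real.log (⨆ j, S ω j i) - Real.log (⨅ j, S ω j i) := by
      intro i l j
      have h1 : Real.log (S ω l i) ≤ Real.log (⨆ j, S ω j i) :=
        Real.log_le_log (hSpos _ _ _) (le_ciSup (f := fun j => S ω j i) (bdA _) l)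
      have h2 : Real.log (⨅ j, S ω j i) ≤ Real.log (S ω j i) :=
        Real.log_le_log (infpos _ fun j => hSpos _ _ _) (ciInf_le (f := fun j => S ω j i) (bdB _) j)
      linarith
    have h3 : Real.log (S ω l k) - Real.log (S ω j k) ≤ κ ω := by
      refine (g k l j).trans ?_
      refine Finset.single_le_sum
        (f := fun i => Real.log (⨆ j, S ω j i) - Real.log (⨅ j, S ω j i)) ?_ (Finset.mem_univ k)
      intro i _
      have := g i l l
      simpa using this
    rw [← Real.log_le_log_iff (hSpos _ _ _) (mul_pos (Real.exp_pos _) (hSpos _ _ _)),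
      Real.log_mul (Real.exp_pos _).ne' (hSpos _ _ _).ne', Real.log_exp]
    linarith
  have hκm : Measurable κ := by
    refine Finset.measurable_sum _ fun i _ => ?_
    exact (Measurable.iSup fun j => hSmeas j i).log.sub (Measurable.iInf fun j => hSmeas j i).log
  have hκi : Integrable κ ℙ := integrable_finset_sum _ fun i _ => hcol i
  have hsymm : MeasurePreserving θ.symm ℙ ℙ := by
    let e : Ω ≃ᵐ Ω := ⟨θ, hθmeas, hθinvmeas⟩
    exact MeasurePreserving.symm e hθmp
  have ham : ∀ n, Measurable (a n) := fun n =>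
    (Finset.measurable_sum _ fun i _ => Finset.measurable_sum _ fun j _ =>
      Sprod_meas θ S hθmeas hSmeas n i j).log
  have hai : Integrable (a 1) ℙ := by
    have e1 : ∀ ω, a 1 ω = Real.log (tot (S ω)) := by intro ω; simp [ha, Sprod]
    have p1 : ∀ ω, 0 < tot (S ω) := fun ω => Finset.sum_pos (fun i _ =>
      Finset.sum_pos (fun j _ => hSpos _ _ _) Finset.univ_nonempty) Finset.univ_nonempty
    have up : ∀ ω, a 1 ω ≤ |Real.log ((N:ℝ)^2)| + lnplus (⨆ i, ⨆ j, S ω i j) := by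
      intro ω
      have h1 : ∀ i j, S ω i j ≤ ⨆ i, ⨆ j, S ω i j := fun i j =>
        (le_ciSup (f := fun j => S ω i j) (bdA _) j).trans
          (le_ciSup (f := fun i => ⨆ j, S ω i j) (bdA _) i)
      have h2 : tot (S ω) ≤ (N:ℝ)^2 * ⨆ i, ⨆ j, S ω i j := by
        unfold tot
        refine (Finset.sum_le_sum fun i _ => Finset.sum_le_sum fun j _ => h1 i j).trans (le_of_eq ?_)
        simp; ring
      have h3 : 0 < ⨆ i, ⨆ j, S ω i j :=
        (hSpos ω (Classical.arbitrary _) (Classical.arbitrary _)).trans_le (h1 _ _)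
      rw [e1]
      refine (Real.log_le_log (p1 ω) h2).trans ?_
      rw [Real.log_mul (by positivity) h3.ne']
      exact add_le_add (le_abs_self _) (le_max_left _ _)
    have fin : ∀ g : Ω → ℝ, (∀ ω, 0 < g ω) → (∀ ω, g ω ≤ tot (S ω)) →
        Integrable (fun ω => lnminus (g ω)) ℙ → Integrable (a 1) ℙ := by
      intro g hg0 hg hgi
      refine Integrable.mono' (((integrable_const (|Real.log ((N:ℝ)^2)|)).add hMint).add hgi)
        (ham 1).aestronglyMeasurable (Eventually.of_forall fun ω => ?_)
      have u := up ω
      have l : - Real.log (g ω) ≤ lnminus (g ω) := le_max_left _ _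
      have l0 : 0 ≤ lnminus (g ω) := le_max_right _ _
      have l1 : 0 ≤ lnplus (⨆ i, ⨆ j, S ω i j) := le_max_right _ _
      have l2 := Real.log_le_log (hg0 ω) (hg ω)
      rw [← e1] at l2
      have := abs_nonneg (Real.log ((N:ℝ)^2))
      simp only [Pi.add_apply, Real.norm_eq_abs]
      rw [abs_le]
      constructor <;> linarith
    let i0 : Fin N := Classical.arbitrary _
    rcases hstrongpos with h | h
    · refine fin _ (fun ω => infpos _ fun i =>
        Finset.sum_pos (fun j _ => hSpos _ _ _) Finset.univ_nonempty) (fun ω => ?_) h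
      refine (ciInf_le (bdB _) i0).trans ?_
      exact Finset.single_le_sum (f := fun i => ∑ j, S ω i j)
        (fun i _ => Finset.sum_nonneg fun j _ => (hSpos _ _ _).le) (Finset.mem_univ i0)
    · refine fin _ (fun ω => infpos _ fun i =>
        Finset.sum_pos (fun j _ => hSpos _ _ _) Finset.univ_nonempty) (fun ω => ?_) h
      rw [tot_swap]
      refine (ciInf_le (bdB _) i0).trans ?_
      exact Finset.single_le_sum (f := fun j => ∑ i, S ω i j)
        (fun i _ => Finset.sum_nonneg fun j _ => (hSpos _ _ _).le) (Finset.mem_univ i0)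
  obtain ⟨γ, hγ⟩ := almost_additive hθerg a (fun ω => Real.log N + κ (θ.symm ω)) ham hai
    (measurable_const.add (hκm.comp hθinvmeas))
    ((integrable_const _).add (hsymm.integrable_comp_of_integrable hκi))
    (by
      intro m n hm hn ω
      simp only [ha]
      rw [Sprod_add, add_comm, ← Real.log_mul (hpos _ _).ne' (hpos _ _).ne']
      refine Real.log_le_log ?_ (tot_mul_le _ _ (hnn _ _) (hnn _ _))
      rw [← Sprod_add]; exact hpos _ _)
    (by
      intro m n hm hn ω
      simp only [ha]
      obtain ⟨m, rfl⟩ : ∃ k, m = k + 1 := ⟨m - 1, by omega⟩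
      have e : Sprod θ S (m+1) ω = S (θ^[m] ω) * Sprod θ S m ω := by
        rw [Sprod_add]; simp [Sprod]
      have h := tot_mul_ge (Sprod θ S n (θ^[m+1] ω)) (Sprod θ S m ω) (S (θ^[m] ω))
        (hnn _ _) (hnn _ _) _ (hratio _)
      rw [← e, ← Sprod_add] at h
      have h2 := Real.log_le_log (mul_pos (hpos _ _) (hpos _ _)) h
      rw [Real.log_mul (hpos _ _).ne' (hpos _ _).ne',
        Real.log_mul (mul_pos hN0 (Real.exp_pos _)).ne' (hpos _ _).ne',
        Real.log_mul hN0.ne' (Real.exp_pos _).ne', Real.log_exp] at h2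
      have e2 : θ.symm (θ^[m+1] ω) = θ^[m] ω := by
        rw [Function.iterate_succ_apply']; simp
      rw [e2]
      linarith)
  refine ⟨γ, ?_⟩
  filter_upwards [hγ] with ω hω
  have t0 := tendsto_const_div_atTop_nhds_zero_nat (Real.log ((N:ℝ)^2))
  have t1 := hω.sub t0
  rw [sub_zero] at t1
  refine tendsto_of_tendsto_of_tendsto_of_le_of_le t1 hω (fun n => ?_) (fun n => ?_)
  all_goals
    have p := hpos n ω
    have h1 := eop_le _ (hnn n ω)
    have h2 := le_eop _ (hnn n ω)
    have pe : 0 < eopNorm (Sprod θ S n ω) :=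
      pos_of_mul_pos_right (p.trans_le h2) (by positivity)
    have q1 := Real.log_le_log pe h1
    have q2 := Real.log_le_log p h2
    rw [Real.log_mul (by positivity) pe.ne'] at q2
    have ni : (0:ℝ) ≤ (n:ℝ)⁻¹ := by positivity
  · simp only [ha]
    rw [div_eq_inv_mul, ← mul_sub]
    exact mul_le_mul_of_nonneg_left (by linarith) ni
  · exact mul_le_mul_of_nonneg_left q1 ni
end

section
/- Assume S(ω) is a Leslie matrix for every ω (top row (m_1(ω),…,m_N(ω)), subdiagonal entries b_1(ω),…,b_{N−1}(ω), all other entries 0), with m_j(ω) > 0 and b_j(ω) > 0 for all ω and all admissible j, and assume ω ↦ ln⁻m₀(ω) and ω ↦ ln⁺M₀(ω) belong to L₁(ℙ), where m₀(ω) := min{m_1(ω),…,m_N(ω), b_1(ω),…,b_{N−1}(ω)} and M₀(ω) := max{m_1(ω),…,m_N(ω), b_1(ω),…,b_{N−1}(ω)}. Then all entries of the N-fold product S^{(N)}(ω) = S(θ^{N−1}ω)⋯S(ω) are strictly positive for every ω, and there exist a θ-invariant set Ω̃₁ ∈ 𝔉 with ℙ(Ω̃₁) = 1, measurable maps w, w*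 : Ω̃₁ → X⁺⁺ with ‖w(ω)‖ = ‖w*(ω)‖ = 1, a finite constant λ̃₁ ∈ (−∞, ∞), and σ̃ ∈ (0, ∞], such that, with F̃₁(ω) := {u ∈ ℝᴺ : ⟨u, w*(ω)⟩ = 0}, for every ω ∈ Ω̃₁: (i) S(ω)·span{w(ω)} = span{w(θω)} and S(ω)F̃₁(ω) = F̃₁(θω); (ii) F̃₁(ω) ∩ X⁺ = {0}; (iii) lim_{n→∞} (1/n) ln‖S^{(n)}(ω)w(ω)‖ = λ̃₁ and limsup_{n→∞} (1/n) ln‖S^{(n)}(ω)u‖ ≤ λ̃₁ for every u ∈ ℝᴺ ∖ {0}; (iv) lim_{n→∞} (1/n)( ln‖S^{(n)}(ω)∣_{F̃₁(ω)}‖ − ln‖S^{(n)}(ω)w(ω)‖ ) = −σ̃. -/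
open MeasureTheory Matrix Filter

/-- The operator norm of the restriction of a matrix to a subspace `F` (as a set). -/
noncomputable def restrNorm {N : ℕ} (M : Matrix (Fin N) (Fin N) ℝ)
    (F : Set (Fin N → ℝ)) : ℝ :=
  sSup {c : ℝ | ∃ u ∈ F, enorm' u ≤ 1 ∧ c = enorm' (M.mulVec u)}

namespace LeslieAux

set_option linter.unusedSectionVars false

/-- Running maxima of Birkhoff sums. -/
noncomputable def bmax {Ω : Type*} (T : Ω → Ω) (g : Ω → ℝ) : ℕ → Ω → ℝ
  | 0, _ => 0
  | n + 1, ω => max 0 (g ω + bmax T g n (T ω))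

lemma bmax_nonneg {Ω : Type*} (T : Ω → Ω) (g : Ω → ℝ) (n : ℕ) (ω : Ω) : 0 ≤ bmax T g n ω := by
  cases n with
  | zero => simp [bmax]
  | succ n => simp [bmax]

lemma bmax_mono {Ω : Type*} (T : Ω → Ω) (g : Ω → ℝ) (n : ℕ) : ∀ ω : Ω,
    bmax T g n ω ≤ bmax T g (n+1) ω := by
  induction n with
  | zero => intro ω; simp [bmax]
  | succ n ih =>
    intro ω
    rw [bmax, bmax]
    have := ih (T ω)
    gcongr

lemma bsum_le_bmax {Ω : Type*} (T : Ω → Ω) (g : Ω → ℝ) (n : ℕ) : ∀ ω : Ω,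
    birkhoffSum T g n ω ≤ bmax T g n ω := by
  induction n with
  | zero => intro ω; simp [bmax]
  | succ n ih =>
    intro ω
    rw [birkhoffSum_succ', bmax]
    exact le_max_of_le_right (by linarith [ih (T ω)])

variable {Ω : Type*} [MeasurableSpace Ω] {μ : Measure Ω} [IsProbabilityMeasure μ] {T : Ω → Ω}

lemma bmax_meas (hT : Measurable T) {g : Ω → ℝ} (hg : Measurable g) (n : ℕ) :
    Measurable (bmax T g n) := by
  induction n with
  | zero => exact measurable_const
  | succ n ih => exact measurable_const.max (hg.add (ih.comp hT))

lemma bmax_int (hT : MeasurePreserving T μ μ) {g : Ω → ℝ} (hgi : Integrable g μ) (n : ℕ) :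
    Integrable (bmax T g n) μ := by
  induction n with
  | zero => exact integrable_zero _ _ _
  | succ n ih => exact (integrable_zero _ _ _).sup (hgi.add (hT.integrable_comp_of_integrable ih))

lemma birk_bdd (hT : Ergodic T μ) {g : Ω → ℝ} (hg : Measurable g) (hgi : Integrable g μ)
    (hneg : ∫ ω, g ω ∂μ < 0) : ∀ᵐ ω ∂μ, ∃ K : ℕ, ∀ n, birkhoffSum T g n ω ≤ K := by
  set U : Set Ω := {ω | ∀ K : ℕ, ∃ n, (K : ℝ) < bmax T g n ω} with hU
  have hUm : MeasurableSet U := by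
    have : U = ⋂ K : ℕ, ⋃ n, {ω | (K : ℝ) < bmax T g n ω} := by
      ext; simp [hU]
    rw [this]
    exact MeasurableSet.iInter fun K => MeasurableSet.iUnion fun n =>
      measurableSet_lt measurable_const (bmax_meas hT.measurable hg n)
  have hsub : T ⁻¹' U ⊆ U := by
    intro ω hω K
    obtain ⟨K', hK'⟩ := exists_nat_gt ((K : ℝ) - g ω)
    obtain ⟨n, hn⟩ := hω K'
    refine ⟨n + 1, lt_of_lt_of_le ?_ (le_max_right _ _)⟩
    linarith
  rcases hT.ae_empty_or_univ_of_preimage_ae_le hUm.nullMeasurableSet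
    (Filter.Eventually.of_forall hsub) with h | h
  · have : ∀ᵐ ω ∂μ, ω ∉ U := by
      exact measure_eq_zero_iff_ae_notMem.1 (ae_eq_empty.1 h)
    filter_upwards [this] with ω hω
    simp only [hU, Set.mem_ofPred_eq, not_forall, not_exists, not_lt] at hω
    obtain ⟨K, hK⟩ := hω
    exact ⟨K, fun n => (bsum_le_bmax T g n ω).trans (hK n)⟩
  · exfalso
    have hae : ∀ᵐ ω ∂μ, ω ∈ U := by
      exact eventuallyEq_univ.1 h
    have hae' : ∀ᵐ ω ∂μ, T ω ∈ U := hT.quasiMeasurePreserving.ae hae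
    have hlim : Tendsto (fun n => ∫ ω, max (-(bmax T g n (T ω))) (g ω) ∂μ) atTop
        (nhds (∫ ω, g ω ∂μ)) := by
      refine tendsto_integral_of_dominated_convergence (fun ω => |g ω|) ?_ hgi.abs ?_ ?_
      · intro n
        exact (((bmax_meas hT.measurable hg n).comp hT.measurable).neg.max hg).aestronglyMeasurable
      · intro n
        refine Filter.Eventually.of_forall fun ω => ?_
        have := bmax_nonneg T g n (T ω)
        rw [Real.norm_eq_abs, abs_le]
        constructor
        · exact le_max_of_le_right (neg_abs_le _)
        · exact max_le (by linarith [abs_nonneg (g ω)]) (le_abs_self _)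
      · filter_upwards [hae'] with ω hω
        obtain ⟨K, hK⟩ := exists_nat_gt (-(g ω))
        obtain ⟨n, hn⟩ := hω K
        have hmono : Monotone fun n => bmax T g n (T ω) :=
          monotone_nat_of_le_succ fun n => bmax_mono T g n (T ω)
        refine tendsto_const_nhds.congr' ?_
        filter_upwards [eventually_ge_atTop n] with k hk
        have := hmono hk
        simp only at this
        rw [max_eq_right]
        linarith
    have hge : ∀ n, 0 ≤ ∫ ω, max (-(bmax T g n (T ω))) (g ω) ∂μ := by
      intro n
      have e : ∀ ω, max (-(bmax T g n (T ω))) (g ω) = bmax T g (n+1) ω - bmax T g n (T ω) := by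
        intro ω
        rw [bmax, ← max_sub_sub_right]
        congr 1 <;> ring
      have i1 := bmax_int hT.toMeasurePreserving hgi (n+1)
      have i0 := bmax_int hT.toMeasurePreserving hgi n
      have i2 : Integrable (fun ω => bmax T g n (T ω)) μ :=
        hT.toMeasurePreserving.integrable_comp_of_integrable i0
      simp_rw [e]
      rw [integral_sub i1 i2]
      have : ∫ ω, bmax T g n (T ω) ∂μ = ∫ ω, bmax T g n ω ∂μ := by
        conv_rhs => rw [← hT.map_eq]
        rw [integral_map hT.measurable.aemeasurable]
        exact (bmax_meas hT.measurable hg n).aestronglyMeasurable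
      rw [this]
      have := integral_mono i0 i1 (fun ω => bmax_mono T g n ω)
      linarith
    have := ge_of_tendsto' hlim hge
    linarith

lemma birk_upper (hT : Ergodic T μ) {g : Ω → ℝ} (hg : Measurable g) (hgi : Integrable g μ)
    {a : ℝ} (ha : ∫ ω, g ω ∂μ < a) : ∀ᵐ ω ∂μ, ∀ᶠ n : ℕ in atTop,
      birkhoffSum T g n ω ≤ n * a := by
  obtain ⟨c, hc1, hc2⟩ := exists_between ha
  have := birk_bdd hT (g := fun ω => g ω - c) (hg.sub_const c) (hgi.sub (integrable_const c)) (by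
    rw [integral_sub hgi (integrable_const c)]; simp; linarith)
  filter_upwards [this] with ω hω
  obtain ⟨K, hK⟩ := hω
  obtain ⟨n0, hn0⟩ := exists_nat_gt (K / (a - c))
  filter_upwards [eventually_ge_atTop n0] with n hn
  have h1 := hK n
  have h2 : birkhoffSum T (fun ω => g ω - c) n ω = birkhoffSum T g n ω - n * c := by
    simp [birkhoffSum, Finset.sum_sub_distrib]
  rw [h2] at h1
  have h3 : (K : ℝ) < n0 * (a - c) := by rwa [div_lt_iff₀ (by linarith)] at hn0
  have h4 : (n0 : ℝ) * (a - c) ≤ n * (a - c) := by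
    have : (n0 : ℝ) ≤ n := by exact_mod_cast hn
    have : 0 < a - c := by linarith
    gcongr
  nlinarith

theorem birkhoff (hT : Ergodic T μ) {g : Ω → ℝ} (hg : Measurable g) (hgi : Integrable g μ) :
    ∀ᵐ ω ∂μ, Tendsto (fun n : ℕ => (n : ℝ)⁻¹ * birkhoffSum T g n ω) atTop
      (nhds (∫ ω, g ω ∂μ)) := by
  have hu : ∀ᵐ ω ∂μ, ∀ k : ℕ, ∀ᶠ n : ℕ in atTop,
      birkhoffSum T g n ω ≤ n * (∫ ω, g ω ∂μ + 1 / ((k : ℝ) + 1)) := by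
    rw [ae_all_iff]
    intro k
    exact birk_upper hT hg hgi (by have : 0 < 1 / ((k : ℝ) + 1) := by positivity
                                   linarith)
  have hl : ∀ᵐ ω ∂μ, ∀ k : ℕ, ∀ᶠ n : ℕ in atTop,
      birkhoffSum T (fun ω => - g ω) n ω ≤ n * (- ∫ ω, g ω ∂μ + 1 / ((k : ℝ) + 1)) := by
    rw [ae_all_iff]
    intro k
    exact birk_upper hT (g := fun ω => - g ω) hg.neg hgi.neg (by
      rw [integral_neg]
      have : 0 < 1 / ((k : ℝ) + 1) := by positivity
      linarith)
  filter_upwards [hu, hl] with ω h1 h2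
  rw [Metric.tendsto_atTop']
  intro ε hε
  obtain ⟨k, hk⟩ := exists_nat_one_div_lt hε
  obtain ⟨n0, hn0⟩ := eventually_atTop.1 ((h1 k).and (h2 k))
  refine ⟨n0, fun n hn => ?_⟩
  obtain ⟨a1, a2⟩ := hn0 n hn.le
  have hn : 0 < (n : ℝ) := by exact_mod_cast (by omega : 0 < n)
  have e : birkhoffSum T (fun ω => - g ω) n ω = - birkhoffSum T g n ω := by
    simp [birkhoffSum]
  rw [e] at a2
  rw [Real.dist_eq, abs_lt]
  have b1 : (n : ℝ)⁻¹ * birkhoffSum T g n ω ≤ ∫ ω, g ω ∂μ + 1 / ((k : ℝ) + 1) := by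
    rw [inv_mul_le_iff₀ hn]; exact a1
  have b2 : ∫ ω, g ω ∂μ - 1 / ((k : ℝ) + 1) ≤ (n : ℝ)⁻¹ * birkhoffSum T g n ω := by
    rw [le_inv_mul_iff₀ hn]; linarith
  constructor <;> linarith

end LeslieAux


namespace LeslieAux

set_option linter.unusedSectionVars false

variable {Ω : Type*} [MeasurableSpace Ω] {μ : Measure Ω} [IsProbabilityMeasure μ] {T : Ω → Ω}

lemma sub_nonpos_all {f : ℕ → Ω → ℝ} (h1 : ∀ ω, f 1 ω ≤ 0)
    (hsub : ∀ n m ω, 1 ≤ n → 1 ≤ m → f (n + m) ω ≤ f n ω + f m (T^[n] ω)) :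
    ∀ n, 1 ≤ n → ∀ ω, f n ω ≤ 0 := by
  intro n hn
  induction n, hn using Nat.le_induction with
  | base => exact h1
  | succ n hn ih =>
    intro ω
    have := hsub n 1 ω hn le_rfl
    linarith [ih ω, h1 (T^[n] ω)]

open Classical in
lemma greedy {f : ℕ → Ω → ℝ} (h1 : ∀ ω, f 1 ω ≤ 0)
    (hsub : ∀ n m ω, 1 ≤ n → 1 ≤ m → f (n + m) ω ≤ f n ω + f m (T^[n] ω))
    {q : ℝ} (hq : q ≤ 0) (K : ℕ) (B : Set Ω)
    (hB : ∀ ω, ω ∉ B → ∃ l, 1 ≤ l ∧ l ≤ K ∧ f l ω < l * q) :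
    ∀ n, 1 ≤ n → ∀ ω, f n ω ≤
      q * (n - K - birkhoffSum T (B.indicator (fun _ => (1:ℝ))) n ω) := by
  have hind : ∀ ω, 0 ≤ B.indicator (fun _ => (1:ℝ)) ω :=
    fun ω => Set.indicator_nonneg (fun _ _ => zero_le_one) ω
  have hbn : ∀ n ω, 0 ≤ birkhoffSum T (B.indicator (fun _ => (1:ℝ))) n ω :=
    fun n ω => Finset.sum_nonneg fun i _ => hind _
  intro n
  induction n using Nat.strong_induction_on with
  | _ n ih =>
    intro hn ω
    by_cases hnK : n ≤ K
    · have a1 := sub_nonpos_all h1 hsub n hn ω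
      have : (n : ℝ) ≤ K := by exact_mod_cast hnK
      have := hbn n ω
      nlinarith
    · push Not at hnK
      by_cases hω : ω ∈ B
      · rcases Nat.lt_or_ge n 2 with h2 | h2
        · obtain rfl : n = 1 := by omega
          obtain rfl : K = 0 := by omega
          simp [hω, h1]
        · obtain ⟨k, rfl⟩ : ∃ k, n = 1 + k := ⟨n - 1, by omega⟩
          have a1 := hsub 1 k ω le_rfl (by omega)
          have a2 := ih k (by omega) (by omega) (T^[1] ω)
          have a3 := h1 ω
          rw [birkhoffSum_add, birkhoffSum_one, Set.indicator_of_mem hω]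
          push_cast
          have : q * (1 + (k:ℝ) - K - (1 + birkhoffSum T (B.indicator fun _ => (1:ℝ)) k (T^[1] ω)))
            = q * ((k:ℝ) - K - (birkhoffSum T (B.indicator fun _ => (1:ℝ)) k (T^[1] ω))) := by ring
          rw [this]
          linarith
      · obtain ⟨l, hl1, hlK, hl⟩ := hB ω hω
        obtain ⟨k, rfl⟩ : ∃ k, n = l + k := ⟨n - l, by omega⟩
        have a1 := hsub l k ω hl1 (by omega)
        have a2 := ih k (by omega) (by omega) (T^[l] ω)
        have a3 := hbn l ω
        rw [birkhoffSum_add]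
        push_cast
        nlinarith

lemma steele (hT : Ergodic T μ) {f : ℕ → Ω → ℝ} (hfm : ∀ n, Measurable (f n))
    (h1 : ∀ ω, f 1 ω ≤ 0)
    (hsub : ∀ n m ω, 1 ≤ n → 1 ≤ m → f (n + m) ω ≤ f n ω + f m (T^[n] ω))
    {q : ℝ} (hD : ∀ᵐ ω ∂μ, ∃ l : ℕ, 1 ≤ l ∧ f l ω < l * q) {ε : ℝ} (hε : 0 < ε) :
    ∀ᵐ ω ∂μ, ∀ᶠ n : ℕ in atTop, f n ω ≤ n * (q + ε) := by
  rcases lt_or_ge 0 q with hq | hq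
  · refine Filter.Eventually.of_forall fun ω => ?_
    filter_upwards [eventually_ge_atTop 1] with n hn
    have := sub_nonpos_all h1 hsub n hn ω
    have : 0 ≤ (n:ℝ) * (q + ε) := by positivity
    linarith
  set B : ℕ → Set Ω := fun K => {ω | ∀ l : ℕ, 1 ≤ l → l ≤ K → l * q ≤ f l ω} with hBdef
  have hBm : ∀ K, MeasurableSet (B K) := by
    intro K
    have : B K = ⋂ l : ℕ, ⋂ _ : 1 ≤ l, ⋂ _ : l ≤ K, {ω | l * q ≤ f l ω} := by
      ext; simp [hBdef]
    rw [this]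
    exact MeasurableSet.iInter fun l => MeasurableSet.iInter fun _ => MeasurableSet.iInter fun _ =>
      measurableSet_le measurable_const (hfm l)
  have hBanti : Antitone B := by
    intro K K' hK ω hω l hl hlK
    exact hω l hl (hlK.trans hK)
  have hlim := tendsto_measure_iInter_atTop (μ := μ) (s := B)
    (fun K => (hBm K).nullMeasurableSet) hBanti ⟨0, measure_ne_top _ _⟩
  have hzero : μ (⋂ n, B n) = 0 := by
    rw [measure_eq_zero_iff_ae_notMem]
    filter_upwards [hD] with ω hω hc
    obtain ⟨l, hl1, hl⟩ := hω
    have := Set.mem_iInter.1 hc l l hl1 le_rfl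
    linarith
  rw [hzero] at hlim
  set a : ℝ := ε / (2 * (1 - q)) with ha
  have ha0 : 0 < a := by
    have : 0 < 1 - q := by linarith
    positivity
  have hqa : (-q) * a ≤ ε / 2 := by
    have h1q : 0 < 1 - q := by linarith
    have : (1 - q) * a = ε / 2 := by rw [ha]; field_simp
    nlinarith
  obtain ⟨K, hK⟩ := (hlim.eventually (gt_mem_nhds (ENNReal.ofReal_pos.2 ha0))).exists
  have hindic : ∫ ω, (B K).indicator (fun _ => (1:ℝ)) ω ∂μ < a := by
    rw [integral_indicator (hBm K)]
    simp only [integral_const, MeasurableSet.univ, measureReal_restrict_apply, Set.univ_inter,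
      smul_eq_mul, mul_one]
    rw [Measure.real]
    exact (ENNReal.lt_ofReal_iff_toReal_lt (measure_ne_top _ _)).1 hK
  have hbu := birk_upper hT (measurable_const.indicator (hBm K))
    ((integrable_const (1:ℝ)).indicator (hBm K)) hindic
  filter_upwards [hbu] with ω hω
  obtain ⟨n0, hn0⟩ := exists_nat_gt ((-q) * K / (ε / 2))
  filter_upwards [hω, eventually_ge_atTop n0, eventually_ge_atTop 1] with n hn hnn hn1
  have g := greedy h1 hsub hq K (B K) (fun ω hω => by
    simp only [hBdef, Set.mem_ofPred_eq, not_forall, not_le] at hω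
    obtain ⟨l, a, b, c⟩ := hω
    exact ⟨l, a, b, c⟩) n hn1 ω
  have h3 : (-q) * K < n0 * (ε / 2) := by rwa [div_lt_iff₀ (by linarith)] at hn0
  have h4 : (n0 : ℝ) ≤ n := by exact_mod_cast hnn
  have h5 : (-q) * birkhoffSum T ((B K).indicator (fun _ => (1:ℝ))) n ω ≤ (-q) * (n * a) :=
    mul_le_mul_of_nonneg_left hn (by linarith)
  have h6 : (-q) * (n * a) ≤ n * (ε / 2) := by
    have : (n:ℝ) * ((-q) * a) ≤ n * (ε / 2) := by gcongr
    linarith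
  have h7 : (n0 : ℝ) * (ε / 2) ≤ n * (ε / 2) := by gcongr
  nlinarith

lemma kingman0 (hT : Ergodic T μ) {f : ℕ → Ω → ℝ} (hfm : ∀ n, Measurable (f n))
    (h1 : ∀ ω, f 1 ω ≤ 0)
    (hsub : ∀ n m ω, 1 ≤ n → 1 ≤ m → f (n + m) ω ≤ f n ω + f m (T^[n] ω)) :
    ∃ c : EReal, ∀ᵐ ω ∂μ, Tendsto (fun n : ℕ => (((n : ℝ)⁻¹ * f n ω : ℝ) : EReal)) atTop
      (nhds c) := by
  set D : ℚ → Set Ω := fun q => {ω | ∃ p : ℚ, p < q ∧ ∃ᶠ n : ℕ in atTop, f n ω < n * (p:ℝ)}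
    with hD
  have hDm : ∀ q, MeasurableSet (D q) := by
    intro q
    have : D q = ⋃ p : ℚ, ⋃ _ : p < q, ⋂ k : ℕ, ⋃ n : ℕ, ⋃ _ : k ≤ n, {ω | f n ω < n * (p:ℝ)} := by
      ext; simp [hD, frequently_atTop]
    rw [this]
    exact MeasurableSet.iUnion fun p => MeasurableSet.iUnion fun _ => MeasurableSet.iInter fun k =>
      MeasurableSet.iUnion fun n => MeasurableSet.iUnion fun _ =>
      measurableSet_lt (hfm n) measurable_const
  have hDsub : ∀ q, T ⁻¹' (D q) ⊆ D q := by
    rintro q ω ⟨p, hpq, hfr⟩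
    obtain ⟨r, hpr, hrq⟩ := exists_between hpq
    refine ⟨r, hrq, ?_⟩
    rw [frequently_atTop] at hfr ⊢
    intro k
    have hpr' : (0:ℝ) < (r:ℝ) - p := by
      have : (p:ℝ) < r := by exact_mod_cast hpr
      linarith
    obtain ⟨n0, hn0⟩ := exists_nat_gt (-(r:ℝ) / ((r:ℝ) - p))
    obtain ⟨n, hn, hfn⟩ := hfr (max (max k n0) 1)
    refine ⟨1 + n, ?_, ?_⟩
    · have := le_max_left k n0; have := le_max_left (max k n0) 1; omega
    · have hn1 : 1 ≤ n := (le_max_right _ _).trans hn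
      have hnn0 : (n0:ℝ) ≤ n := by
        exact_mod_cast ((le_max_right k n0).trans (le_max_left _ 1)).trans hn
      have a1 := hsub 1 n ω le_rfl hn1
      have a2 := h1 ω
      rw [Function.iterate_one] at a1
      have a3 : -(r:ℝ) < n0 * ((r:ℝ) - p) := by rwa [div_lt_iff₀ hpr'] at hn0
      have a4 : (n0:ℝ) * ((r:ℝ) - p) ≤ n * ((r:ℝ) - p) := by gcongr
      push_cast
      nlinarith
  have hdich : ∀ q, (∀ᵐ ω ∂μ, ω ∉ D q) ∨ (∀ᵐ ω ∂μ, ω ∈ D q) := by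
    intro q
    rcases hT.ae_empty_or_univ_of_preimage_ae_le (hDm q).nullMeasurableSet
      (Filter.Eventually.of_forall (hDsub q)) with h | h
    · exact Or.inl (measure_eq_zero_iff_ae_notMem.1 (ae_eq_empty.1 h))
    · exact Or.inr (eventuallyEq_univ.1 h)
  set c : EReal := sInf {x : EReal | ∃ q : ℚ, (∀ᵐ ω ∂μ, ω ∈ D q) ∧ x = ((q:ℝ):EReal)} with hc
  refine ⟨c, ?_⟩
  have hup : ∀ᵐ ω ∂μ, ∀ q : ℚ, (∀ᵐ ω ∂μ, ω ∈ D q) → ∀ k : ℕ, ∀ᶠ n : ℕ in atTop,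
      f n ω ≤ n * (q + 1 / ((k:ℝ) + 1)) := by
    rw [ae_all_iff]
    intro q
    by_cases hq : ∀ᵐ ω ∂μ, ω ∈ D q
    · have : ∀ᵐ ω ∂μ, ∀ k : ℕ, ∀ᶠ n : ℕ in atTop, f n ω ≤ n * (q + 1 / ((k:ℝ) + 1)) := by
        rw [ae_all_iff]
        intro k
        refine steele hT hfm h1 hsub ?_ (by positivity)
        filter_upwards [hq] with ω hω
        obtain ⟨p, hpq, hfr⟩ := hω
        obtain ⟨n, hn, hfn⟩ := frequently_atTop.1 hfr 1
        refine ⟨n, hn, hfn.trans_le ?_⟩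
        have : (p:ℝ) ≤ q := by exact_mod_cast hpq.le
        gcongr
      filter_upwards [this] with ω hω _ using hω
    · exact Filter.Eventually.of_forall fun ω h => absurd h hq
  have hlo : ∀ᵐ ω ∂μ, ∀ q : ℚ, ¬ (∀ᵐ ω ∂μ, ω ∈ D q) → ω ∉ D q := by
    rw [ae_all_iff]
    intro q
    rcases hdich q with h | h
    · filter_upwards [h] with ω hω _ using hω
    · exact Filter.Eventually.of_forall fun ω hh => absurd h hh
  filter_upwards [hup, hlo] with ω hu hl
  rw [tendsto_order]
  constructor
  · intro a hac
    obtain ⟨p, hap, hpc⟩ := EReal.lt_iff_exists_rat_btwn.1 hac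
    obtain ⟨q, hpq, hqc⟩ := EReal.lt_iff_exists_rat_btwn.1 hpc
    have hnq : ¬ (∀ᵐ ω ∂μ, ω ∈ D q) := by
      intro h
      have : c ≤ ((q:ℝ):EReal) := sInf_le ⟨q, h, rfl⟩
      exact absurd hqc (not_lt.2 this)
    have := hl q hnq
    simp only [hD, Set.mem_ofPred_eq, not_exists, not_and, not_frequently, not_lt] at this
    have hpq' : p < q := by exact_mod_cast hpq
    filter_upwards [this p hpq', eventually_ge_atTop 1] with n hn hn1
    have hn0 : 0 < (n : ℝ) := by exact_mod_cast hn1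
    refine hap.trans_le ?_
    rw [EReal.coe_le_coe_iff, le_inv_mul_iff₀ hn0]
    exact hn
  · intro a hca
    obtain ⟨x, ⟨q, hq, rfl⟩, hqa⟩ := sInf_lt_iff.1 hca
    obtain ⟨r, hqr, hra⟩ := EReal.lt_iff_exists_rat_btwn.1 hqa
    have hqr' : (q:ℝ) < r := by exact_mod_cast hqr
    obtain ⟨k, hk⟩ := exists_nat_one_div_lt (sub_pos.2 hqr')
    filter_upwards [hu q hq k, eventually_ge_atTop 1] with n hn hn1
    have hn0 : 0 < (n : ℝ) := by exact_mod_cast hn1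
    refine lt_of_le_of_lt ?_ hra
    rw [EReal.coe_le_coe_iff, inv_mul_le_iff₀ hn0]
    refine hn.trans ?_
    gcongr
    linarith

theorem kingman (hT : Ergodic T μ) {f : ℕ → Ω → ℝ} (hfm : ∀ n, Measurable (f n))
    {g : Ω → ℝ} (hg : Measurable g) (hgi : Integrable g μ) (h1 : ∀ ω, f 1 ω ≤ g ω)
    (hsub : ∀ n m ω, 1 ≤ n → 1 ≤ m → f (n + m) ω ≤ f n ω + f m (T^[n] ω)) :
    ∃ c : EReal, ∀ᵐ ω ∂μ, Tendsto (fun n : ℕ => (((n : ℝ)⁻¹ * f n ω : ℝ) : EReal)) atTop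
      (nhds c) := by
  have hbm : ∀ n, Measurable (birkhoffSum T g n) := by
    intro n
    exact Finset.measurable_sum _ fun i _ => hg.comp (hT.measurable.iterate i)
  obtain ⟨c, hc⟩ := kingman0 hT (f := fun n ω => f n ω - birkhoffSum T g n ω)
    (fun n => (hfm n).sub (hbm n)) (fun ω => by simpa using h1 ω) (by
      intro n m ω hn hm
      have := hsub n m ω hn hm
      rw [birkhoffSum_add]
      linarith)
  refine ⟨c + ((∫ ω, g ω ∂μ : ℝ) : EReal), ?_⟩
  filter_upwards [hc, birkhoff hT hg hgi] with ω h1 h2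
  have h2' : Tendsto (fun n : ℕ => (((n : ℝ)⁻¹ * birkhoffSum T g n ω : ℝ) : EReal)) atTop
      (nhds ((∫ ω, g ω ∂μ : ℝ) : EReal)) := (continuous_coe_real_ereal.tendsto _).comp h2
  have h3 : Tendsto (fun p : EReal × EReal => p.1 + p.2)
      (nhds (c, ((∫ ω, g ω ∂μ : ℝ) : EReal))) (nhds (c + ((∫ ω, g ω ∂μ : ℝ) : EReal))) :=
    EReal.continuousAt_add (Or.inr (EReal.coe_ne_bot _)) (Or.inr (EReal.coe_ne_top _))
  refine (h3.comp (h1.prodMk_nhds h2')).congr fun n => ?_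
  simp only [Function.comp]
  rw [← EReal.coe_add]
  congr 1
  ring

end LeslieAux


namespace LeslieAux

section det

set_option linter.unusedSectionVars false

variable {ι : Type*} [Fintype ι] [Nonempty ι]

lemma avg_upper {κ : ℝ} (hκ0 : 0 ≤ κ) (p x q : ι → ℝ) (hp : ∀ k, 0 < p k)
    {hi : ℝ} (hx : ∀ k, x k ≤ hi)
    (hQ : ∀ k l, κ * q l ≤ q k) (ht : 0 < ∑ k, p k * q k) :
    (∑ k, p k * x k * q k) / (∑ k, p k * q k) ≤
      κ * ((∑ k, p k * x k) / ∑ k, p k) + (1 - κ) * hi := by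
  have hs : 0 < ∑ k, p k := Finset.sum_pos (fun k _ => hp k) Finset.univ_nonempty
  set s := ∑ k, p k with hsdef
  set t := ∑ k, p k * q k with htdef
  have key : ∀ k, κ * t ≤ q k * s := by
    intro k
    rw [htdef, hsdef, Finset.mul_sum, Finset.mul_sum]
    refine Finset.sum_le_sum fun l _ => ?_
    nlinarith [hQ k l, hp l]
  have h1 : 0 ≤ ∑ k, p k * (hi - x k) * (q k * s - κ * t) := by
    refine Finset.sum_nonneg fun k _ => ?_
    exact mul_nonneg (mul_nonneg (hp k).le (by linarith [hx k])) (by linarith [key k])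
  have h2 : ∑ k, p k * (hi - x k) * (q k * s - κ * t)
      = s * (hi * t - ∑ k, p k * x k * q k) - κ * t * (hi * s - ∑ k, p k * x k) := by
    have e : ∀ k, p k * (hi - x k) * (q k * s - κ * t) = s * hi * (p k * q k) - s * (p k * x k * q k)
        - κ * t * hi * p k + κ * t * (p k * x k) := fun k => by ring
    simp_rw [e]
    rw [Finset.sum_add_distrib, Finset.sum_sub_distrib, Finset.sum_sub_distrib,
      ← Finset.mul_sum, ← Finset.mul_sum, ← Finset.mul_sum, ← Finset.mul_sum, ← htdef, ← hsdef]
    ring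
  rw [h2] at h1
  rw [div_le_iff₀ ht]
  have : (κ * ((∑ k, p k * x k) / s) + (1 - κ) * hi) * t
      = (κ * t * (∑ k, p k * x k) + (1 - κ) * hi * t * s) / s := by field_simp
  rw [this, le_div_iff₀ hs]
  nlinarith

lemma avg_lower {κ : ℝ} (hκ0 : 0 ≤ κ) (p x q : ι → ℝ) (hp : ∀ k, 0 < p k)
    {lo : ℝ} (hx : ∀ k, lo ≤ x k)
    (hQ : ∀ k l, κ * q l ≤ q k) (ht : 0 < ∑ k, p k * q k) :
    κ * ((∑ k, p k * x k) / ∑ k, p k) + (1 - κ) * lo ≤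
    (∑ k, p k * x k * q k) / (∑ k, p k * q k) := by
  have := avg_upper hκ0 p (fun k => - x k) q hp (hi := -lo) (fun k => by linarith [hx k]) hQ ht
  simp only [mul_neg, neg_mul, Finset.sum_neg_distrib, neg_div] at this
  linarith

/-- largest ratio -/
noncomputable def rhi (P : Matrix ι ι ℝ) (i0 i : ι) : ℝ := ⨆ j, P i j / P i0 j
/-- smallest ratio -/
noncomputable def rlo (P : Matrix ι ι ℝ) (i0 i : ι) : ℝ := ⨅ j, P i j / P i0 j
/-- total oscillation -/
noncomputable def tosc (P : Matrix ι ι ℝ) (i0 : ι) : ℝ := ∑ i, (rhi P i0 i - rlo P i0 i)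

lemma le_rhi (P : Matrix ι ι ℝ) (i0 i j : ι) : P i j / P i0 j ≤ rhi P i0 i :=
  le_ciSup (f := fun j => P i j / P i0 j) (Set.finite_range _).bddAbove j

lemma rlo_le (P : Matrix ι ι ℝ) (i0 i j : ι) : rlo P i0 i ≤ P i j / P i0 j :=
  ciInf_le (f := fun j => P i j / P i0 j) (Set.finite_range _).bddBelow j

lemma rlo_le_rhi (P : Matrix ι ι ℝ) (i0 i : ι) : rlo P i0 i ≤ rhi P i0 i :=
  (rlo_le P i0 i i0).trans (le_rhi P i0 i i0)

lemma osc_le_tosc (P : Matrix ι ι ℝ) (i0 i : ι) : rhi P i0 i - rlo P i0 i ≤ tosc P i0 :=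
  Finset.single_le_sum (f := fun i => rhi P i0 i - rlo P i0 i)
    (fun i _ => sub_nonneg.2 (rlo_le_rhi P i0 i)) (Finset.mem_univ i)

lemma tosc_nonneg (P : Matrix ι ι ℝ) (i0 : ι) : 0 ≤ tosc P i0 :=
  Finset.sum_nonneg (fun i _ => sub_nonneg.2 (rlo_le_rhi P i0 i))

lemma rlo_pos {P : Matrix ι ι ℝ} (hP : ∀ i j, 0 < P i j) (i0 i : ι) : 0 < rlo P i0 i := by
  obtain ⟨j, hj⟩ := exists_eq_ciInf_of_finite (f := fun j => P i j / P i0 j)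
  rw [rlo, ← hj]
  exact div_pos (hP _ _) (hP _ _)

lemma cone_bounds {κ : ℝ} (hκ0 : 0 ≤ κ) {P Q : Matrix ι ι ℝ} (i0 : ι)
    (hP : ∀ i j, 0 < P i j) (hPQ : ∀ i j, 0 < (P * Q) i j)
    (hQ : ∀ k l j, κ * Q l j ≤ Q k j) (i : ι) :
    ∃ A, (∀ j, (P * Q) i j / (P * Q) i0 j ≤ κ * A + (1 - κ) * rhi P i0 i) ∧
      (∀ j, κ * A + (1 - κ) * rlo P i0 i ≤ (P * Q) i j / (P * Q) i0 j) := by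
  have e : ∀ j, (P * Q) i j = ∑ k, P i0 k * (P i k / P i0 k) * Q k j := by
    intro j
    rw [Matrix.mul_apply]
    refine Finset.sum_congr rfl fun k _ => ?_
    rw [mul_div_cancel₀ _ (hP i0 k).ne']
  refine ⟨(∑ k, P i0 k * (P i k / P i0 k)) / ∑ k, P i0 k, fun j => ?_, fun j => ?_⟩
  · rw [e j, Matrix.mul_apply]
    exact avg_upper hκ0 (P i0) (fun k => P i k / P i0 k) (fun k => Q k j) (hP i0)
      (fun k => le_rhi P i0 i k) (fun k l => hQ k l j) (by
        have := hPQ i0 j; rwa [Matrix.mul_apply] at this)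
  · rw [e j, Matrix.mul_apply]
    exact avg_lower hκ0 (P i0) (fun k => P i k / P i0 k) (fun k => Q k j) (hP i0)
      (fun k => rlo_le P i0 i k) (fun k l => hQ k l j) (by
        have := hPQ i0 j; rwa [Matrix.mul_apply] at this)

lemma cone_contract {κ : ℝ} (hκ0 : 0 ≤ κ) {P Q : Matrix ι ι ℝ} (i0 : ι)
    (hP : ∀ i j, 0 < P i j) (hPQ : ∀ i j, 0 < (P * Q) i j)
    (hQ : ∀ k l j, κ * Q l j ≤ Q k j) :
    tosc (P * Q) i0 ≤ (1 - κ) * tosc P i0 := by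
  rw [tosc, tosc, Finset.mul_sum]
  refine Finset.sum_le_sum fun i _ => ?_
  obtain ⟨A, h1, h2⟩ := cone_bounds hκ0 i0 hP hPQ hQ i
  have a1 : rhi (P * Q) i0 i ≤ _ := ciSup_le h1
  have a2 : _ ≤ rlo (P * Q) i0 i := le_ciInf h2
  linarith

lemma cone_mono {P Q : Matrix ι ι ℝ} (i0 : ι)
    (hP : ∀ i j, 0 < P i j) (hPQ : ∀ i j, 0 < (P * Q) i j)
    (hQ : ∀ k j, 0 ≤ Q k j) (i : ι) :
    rhi (P * Q) i0 i ≤ rhi P i0 i ∧ rlo P i0 i ≤ rlo (P * Q) i0 i := by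
  obtain ⟨A, h1, h2⟩ := cone_bounds (κ := 0) le_rfl i0 hP hPQ (fun k l j => by simpa using hQ k j) i
  simp only [zero_mul, zero_add, sub_zero, one_mul] at h1 h2
  exact ⟨ciSup_le h1, le_ciInf h2⟩

/-- decay of the oscillation sequence -/
lemma osc_decay {o κ : ℕ → ℝ} {d : ℕ} (ho : ∀ n, 0 ≤ o n) (hanti : Antitone o)
    (hc : ∀ n, o (n + (d + 1)) ≤ (1 - κ n) * o n) :
    ∃ C, 0 < C ∧ ∀ n, o (n + d) ^ (d + 1) ≤ C * Real.exp (- ∑ k ∈ Finset.range n, κ k) := by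
  have hprod : ∀ n, ∏ i ∈ Finset.range (d + 1), o (n + i) ≤
      (∏ i ∈ Finset.range (d + 1), o i) * Real.exp (- ∑ k ∈ Finset.range n, κ k) := by
    intro n
    induction n with
    | zero => simp
    | succ n ih =>
      have e1 : ∏ i ∈ Finset.range (d + 1), o (n + 1 + i)
          = (∏ i ∈ Finset.range d, o (n + 1 + i)) * o (n + (d + 1)) := by
        rw [Finset.prod_range_succ]; congr 2; ring
      have e2 : ∏ i ∈ Finset.range (d + 1), o (n + i)
          = (∏ i ∈ Finset.range d, o (n + 1 + i)) * o n := by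
        rw [Finset.prod_range_succ']
        congr 1
        refine Finset.prod_congr rfl fun i _ => ?_
        congr 1; ring
      have hnn : 0 ≤ ∏ i ∈ Finset.range d, o (n + 1 + i) := Finset.prod_nonneg fun i _ => ho _
      have hexp : 1 - κ n ≤ Real.exp (- κ n) := by
        have := Real.add_one_le_exp (- κ n); linarith
      rw [e1, Finset.sum_range_succ, neg_add, Real.exp_add]
      calc _ ≤ (∏ i ∈ Finset.range d, o (n + 1 + i)) * ((1 - κ n) * o n) := by gcongr; exact hc n
        _ = (1 - κ n) * ∏ i ∈ Finset.range (d + 1), o (n + i) := by rw [e2]; ring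
        _ ≤ Real.exp (- κ n) * ((∏ i ∈ Finset.range (d + 1), o i) *
              Real.exp (- ∑ k ∈ Finset.range n, κ k)) := by
            refine mul_le_mul hexp ih (Finset.prod_nonneg fun i _ => ho _) (Real.exp_pos _).le
        _ = _ := by ring
  refine ⟨(∏ i ∈ Finset.range (d + 1), o i) + 1, ?_, fun n => ?_⟩
  · have : 0 ≤ ∏ i ∈ Finset.range (d + 1), o i := Finset.prod_nonneg fun i _ => ho _
    linarith
  · calc o (n + d) ^ (d + 1) = ∏ _i ∈ Finset.range (d + 1), o (n + d) := by simp
      _ ≤ ∏ i ∈ Finset.range (d + 1), o (n + i) := by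
          refine Finset.prod_le_prod (fun i _ => ho _) fun i hi => hanti ?_
          have := Finset.mem_range.1 hi
          omega
      _ ≤ _ := hprod n
      _ ≤ _ := by
        have := Real.exp_pos (- ∑ k ∈ Finset.range n, κ k)
        nlinarith

lemma osc_exp {o κ : ℕ → ℝ} {d : ℕ} (ho : ∀ n, 0 ≤ o n) (hanti : Antitone o)
    (hc : ∀ n, o (n + (d + 1)) ≤ (1 - κ n) * o n) {a : ℝ} (ha : 0 < a)
    (hlim : Tendsto (fun n : ℕ => (n : ℝ)⁻¹ * ∑ k ∈ Finset.range n, κ k) atTop (nhds a))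
    (r : ℕ) :
    ∀ᶠ n : ℕ in atTop, o n ≤ Real.exp (- (a / (2 * (d + 1))) * ((n + r : ℕ) : ℝ)) := by
  obtain ⟨C, hC, hb⟩ := osc_decay ho hanti hc
  have h1 : ∀ᶠ n : ℕ in atTop, n * (3 / 4 * a) ≤ ∑ k ∈ Finset.range n, κ k := by
    filter_upwards [hlim.eventually (lt_mem_nhds (show 3 / 4 * a < a by linarith)),
      eventually_ge_atTop 1] with n hn hn1
    have hn0 : 0 < (n : ℝ) := by exact_mod_cast hn1
    rw [lt_inv_mul_iff₀ hn0] at hn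
    exact hn.le
  have h2 : ∀ᶠ n : ℕ in atTop, Real.log C + a / 2 * (d + r) ≤ n * (a / 4) := by
    obtain ⟨n0, hn0⟩ := exists_nat_gt ((Real.log C + a / 2 * (d + r)) / (a / 4))
    filter_upwards [eventually_ge_atTop n0] with n hn
    rw [div_lt_iff₀ (by linarith)] at hn0
    have : (n0 : ℝ) ≤ n := by exact_mod_cast hn
    have : (n0 : ℝ) * (a / 4) ≤ n * (a / 4) := by gcongr
    linarith
  have h3 : ∀ᶠ n : ℕ in atTop, o (n + d) ≤
      Real.exp (- (a / (2 * (d + 1))) * ((n + d + r : ℕ) : ℝ)) := by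
    filter_upwards [h1, h2] with n h1 h2
    refine (pow_le_pow_iff_left₀ (ho _) (Real.exp_pos _).le (Nat.succ_ne_zero d)).1 ?_
    refine (hb n).trans ?_
    rw [← Real.exp_nat_mul, ← Real.exp_log hC, ← Real.exp_add, Real.exp_le_exp]
    have e : ((d.succ : ℕ) : ℝ) * (- (a / (2 * (d + 1))) * ((n + d + r : ℕ) : ℝ)) =
        - (a / 2) * (n + d + r) := by
      push_cast
      field_simp
    rw [e]
    nlinarith
  obtain ⟨n0, hn0⟩ := eventually_atTop.1 h3
  filter_upwards [eventually_ge_atTop (n0 + d)] with n hn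
  have := hn0 (n - d) (by omega)
  rwa [Nat.sub_add_cancel (by omega)] at this

/-- existence of the limiting ratio -/
lemma ratio_limit {P C : ℕ → Matrix ι ι ℝ} (i0 : ι) (hP : ∀ n i j, 0 < P n i j)
    (hC : ∀ n i j, 0 ≤ C n i j) (hs : ∀ n, P (n + 1) = P n * C n) :
    ∃ R : ι → ℝ, (∀ i, 0 < R i) ∧ ∀ n i j, |P n i j / P n i0 j - R i| ≤ tosc (P n) i0 := by
  have hm : ∀ n i, rhi (P (n+1)) i0 i ≤ rhi (P n) i0 i ∧ rlo (P n) i0 i ≤ rlo (P (n+1)) i0 i := by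
    intro n i
    have := hP (n+1)
    rw [hs n] at this ⊢
    exact cone_mono i0 (hP n) this (hC n) i
  have hhi : ∀ i, Antitone fun n => rhi (P n) i0 i := fun i =>
    antitone_nat_of_succ_le fun n => (hm n i).1
  have hlo : ∀ i, Monotone fun n => rlo (P n) i0 i := fun i =>
    monotone_nat_of_le_succ fun n => (hm n i).2
  have hlh : ∀ i n k, rlo (P n) i0 i ≤ rhi (P k) i0 i := by
    intro i n k
    exact (hlo i (le_max_left n k)).trans ((rlo_le_rhi _ _ _).trans (hhi i (le_max_right n k)))
  refine ⟨fun i => ⨅ n, rhi (P n) i0 i, fun i => ?_, fun n i j => ?_⟩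
  · exact (rlo_pos (hP 0) i0 i).trans_le (le_ciInf fun k => hlh i 0 k)
  · have a1 : (⨅ n, rhi (P n) i0 i) ≤ rhi (P n) i0 i :=
      ciInf_le ⟨rlo (P 0) i0 i, by rintro _ ⟨k, rfl⟩; exact hlh i 0 k⟩ n
    have a2 : rlo (P n) i0 i ≤ ⨅ n, rhi (P n) i0 i := le_ciInf fun k => hlh i n k
    have a3 := le_rhi (P n) i0 i j
    have a4 := rlo_le (P n) i0 i j
    have a5 := osc_le_tosc (P n) i0 i
    rw [abs_le]; constructor <;> linarith

end det

end LeslieAux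


namespace LeslieAux

section enormlemmas
variable {N : ℕ}

lemma enorm_eq (u : Fin N → ℝ) : enorm' u = ‖WithLp.toLp 2 u‖ := by
  rw [EuclideanSpace.norm_eq, enorm']
  simp

lemma enorm_nonneg (u : Fin N → ℝ) : 0 ≤ enorm' u := Real.sqrt_nonneg _

lemma enorm_smul (c : ℝ) (u : Fin N → ℝ) : enorm' (c • u) = |c| * enorm' u := by
  rw [enorm_eq, enorm_eq, WithLp.toLp_smul, norm_smul, Real.norm_eq_abs]

lemma enorm_pos {u : Fin N → ℝ} (hu : u ≠ 0) : 0 < enorm' u := by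
  rw [enorm_eq, norm_pos_iff]
  simpa using hu

lemma enorm_zero : enorm' (0 : Fin N → ℝ) = 0 := by simp [enorm']

lemma abs_le_enorm (u : Fin N → ℝ) (i : Fin N) : |u i| ≤ enorm' u := by
  rw [enorm_eq]
  have := PiLp.norm_apply_le (WithLp.toLp 2 u) i
  simpa using this

lemma enorm_le_sum (u : Fin N → ℝ) : enorm' u ≤ ∑ i, |u i| := by
  rw [enorm', Real.sqrt_le_left (Finset.sum_nonneg fun i _ => abs_nonneg _)]
  calc ∑ i, u i ^ 2 = ∑ i, |u i| * |u i| := by simp [← sq]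
    _ ≤ ∑ i, |u i| * ∑ j, |u j| := by
      refine Finset.sum_le_sum fun i _ => ?_
      gcongr
      exact Finset.single_le_sum (f := fun j => |u j|) (fun j _ => abs_nonneg _) (Finset.mem_univ i)
    _ = _ := by rw [← Finset.sum_mul, sq]

lemma enorm_mono {u v : Fin N → ℝ} (h : ∀ i, |u i| ≤ |v i|) : enorm' u ≤ enorm' v := by
  refine Real.sqrt_le_sqrt (Finset.sum_le_sum fun i _ => ?_)
  exact sq_le_sq.2 (h i)

lemma enorm_meas : Measurable (enorm' : (Fin N → ℝ) → ℝ) := by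
  have : (enorm' : (Fin N → ℝ) → ℝ) = fun u => Real.sqrt (∑ i, (u i) ^ 2) := rfl
  rw [this]
  fun_prop

end enormlemmas

/-- backward products -/
noncomputable def Pp {Ω : Type*} {N : ℕ} (τ : Ω → Ω) (B : Ω → Matrix (Fin N) (Fin N) ℝ) :
    ℕ → Ω → Matrix (Fin N) (Fin N) ℝ
  | 0, _ => 1
  | n + 1, ω => B ω * Pp τ B n (τ ω)

section rand
variable {Ω : Type*} {N : ℕ} {τ : Ω → Ω} {B : Ω → Matrix (Fin N) (Fin N) ℝ}

lemma Pp_add (n m : ℕ) : ∀ ω, Pp τ B (n + m) ω = Pp τ B n ω * Pp τ B m (τ^[n] ω) := by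
  induction n with
  | zero => intro ω; simp [Pp]
  | succ n ih =>
    intro ω
    rw [show n + 1 + m = (n + m) + 1 by ring, Pp, Pp, ih, Matrix.mul_assoc,
      Function.iterate_succ_apply]

lemma Pp_one (ω : Ω) : Pp τ B 1 ω = B ω := by simp [Pp]

lemma Pp_pos (hB0 : ∀ ω i j, 0 ≤ B ω i j) (hBr : ∀ ω i, ∃ j, 0 < B ω i j) {d : ℕ}
    (hd : ∀ ω i j, 0 < Pp τ B d ω i j) (n : ℕ) (hn : d ≤ n) : ∀ ω i j, 0 < Pp τ B n ω i j := by
  induction n, hn using Nat.le_induction with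
  | base => exact hd
  | succ n hn ih =>
    intro ω i j
    rw [Pp, Matrix.mul_apply]
    obtain ⟨k, hk⟩ := hBr ω i
    exact Finset.sum_pos' (fun l _ => mul_nonneg (hB0 _ _ _) (ih _ _ _).le)
      ⟨k, Finset.mem_univ k, mul_pos hk (ih _ _ _)⟩

/-- Equivariance of the limit directions. -/
lemma equivariant (hB0 : ∀ ω i j, 0 ≤ B ω i j) (hBr : ∀ ω i, ∃ j, 0 < B ω i j)
    (i0 : Fin N) {v : Ω → Fin N → ℝ} {δ : ℝ} (hδ : 0 < δ) {ω : Ω}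
    (hv : ∀ i, 0 < v ω i) (hv' : ∀ i, 0 < v (τ ω) i)
    (h : ∀ᶠ n : ℕ in atTop, ∀ i j, 0 < Pp τ B n ω i j ∧
        |Pp τ B n ω i j / Pp τ B n ω i0 j - v ω i / v ω i0| ≤ Real.exp (-δ * n))
    (h' : ∀ᶠ n : ℕ in atTop, ∀ i j, 0 < Pp τ B n (τ ω) i j ∧
        |Pp τ B n (τ ω) i j / Pp τ B n (τ ω) i0 j - v (τ ω) i / v (τ ω) i0| ≤ Real.exp (-δ * n)) :
    ∃ c : ℝ, 0 < c ∧ (B ω) *ᵥ (v (τ ω)) = c • v ω := by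
  have hto : Tendsto (fun n : ℕ => Real.exp (-δ * n)) atTop (nhds 0) := by
    refine Real.tendsto_exp_atBot.comp ?_
    exact Tendsto.const_mul_atTop_of_neg (by linarith) tendsto_natCast_atTop_atTop
  have conv : ∀ ω', (∀ᶠ n : ℕ in atTop, ∀ i j, 0 < Pp τ B n ω' i j ∧
        |Pp τ B n ω' i j / Pp τ B n ω' i0 j - v ω' i / v ω' i0| ≤ Real.exp (-δ * n)) → ∀ i,
      Tendsto (fun n => Pp τ B n ω' i i0 / Pp τ B n ω' i0 i0) atTop (nhds (v ω' i / v ω' i0)) := by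
    intro ω' hh i
    rw [tendsto_iff_dist_tendsto_zero]
    refine squeeze_zero' (Filter.Eventually.of_forall fun n => dist_nonneg) ?_ hto
    filter_upwards [hh] with n hn
    exact (hn i i0).2
  set y : Fin N → ℝ := (B ω) *ᵥ (v (τ ω)) with hy
  have hypos : ∀ i, 0 < y i := by
    intro i
    obtain ⟨k, hk⟩ := hBr ω i
    rw [hy, Matrix.mulVec, dotProduct]
    exact Finset.sum_pos' (fun l _ => mul_nonneg (hB0 _ _ _) (hv' l).le)
      ⟨k, Finset.mem_univ k, mul_pos hk (hv' k)⟩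
  have hlim1 : ∀ i, Tendsto (fun n => Pp τ B (n + 1) ω i i0 / Pp τ B n (τ ω) i0 i0) atTop
      (nhds (y i / v (τ ω) i0)) := by
    intro i
    have e1 : ∀ n, Pp τ B (n + 1) ω i i0 / Pp τ B n (τ ω) i0 i0 =
        ∑ k, B ω i k * (Pp τ B n (τ ω) k i0 / Pp τ B n (τ ω) i0 i0) := by
      intro n
      rw [Pp, Matrix.mul_apply, Finset.sum_div]
      exact Finset.sum_congr rfl fun k _ => mul_div_assoc _ _ _
    have e2 : y i / v (τ ω) i0 = ∑ k, B ω i k * (v (τ ω) k / v (τ ω) i0) := by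
      rw [hy, Matrix.mulVec, dotProduct, Finset.sum_div]
      exact Finset.sum_congr rfl fun k _ => mul_div_assoc _ _ _
    simp_rw [e1]
    rw [e2]
    exact tendsto_finsetSum _ fun k _ => (conv _ h' k).const_mul _
  have hlim2 : ∀ i, Tendsto (fun n => Pp τ B (n + 1) ω i i0 / Pp τ B (n + 1) ω i0 i0) atTop
      (nhds (y i / y i0)) := by
    intro i
    have hne : y i0 / v (τ ω) i0 ≠ 0 := (div_pos (hypos _) (hv' _)).ne'
    have := (hlim1 i).div (hlim1 i0) hne
    rw [div_div_div_cancel_right₀ (hv' i0).ne'] at this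
    refine this.congr' ?_
    filter_upwards [h'] with n hn
    simp only [Pi.div_apply]
    rw [div_div_div_cancel_right₀ (hn i0 i0).1.ne']
  refine ⟨y i0 / v ω i0, div_pos (hypos _) (hv _), ?_⟩
  funext i
  have := tendsto_nhds_unique (hlim2 i) ((tendsto_add_atTop_iff_nat 1).2 (conv ω h i))
  rw [div_eq_div_iff (hypos i0).ne' (hv i0).ne'] at this
  simp only [Pi.smul_apply, smul_eq_mul]
  rw [div_mul_eq_mul_div, eq_div_iff (hv i0).ne']
  linarith

variable [MeasurableSpace Ω]

lemma Pp_meas (hτ : Measurable τ) (hBm : ∀ i j, Measurable fun ω => B ω i j) (n : ℕ) :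
    ∀ i j, Measurable fun ω => Pp τ B n ω i j := by
  induction n with
  | zero => intro i j; exact measurable_const
  | succ n ih =>
    intro i j
    simp only [Pp, Matrix.mul_apply]
    exact Finset.measurable_sum _ fun k _ => (hBm i k).mul ((ih k j).comp hτ)

theorem random_cone {μ : Measure Ω} [IsProbabilityMeasure μ] (hτ : Ergodic τ μ)
    (hBm : ∀ i j, Measurable fun ω => B ω i j)
    (hB0 : ∀ ω i j, 0 ≤ B ω i j) (hBr : ∀ ω i, ∃ j, 0 < B ω i j) {e : ℕ}
    (hd : ∀ ω i j, 0 < Pp τ B (e + 1) ω i j) (i0 : Fin N) :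
    ∃ δ : ℝ, 0 < δ ∧ ∃ v : Ω → Fin N → ℝ, Measurable v ∧ ∀ᵐ ω ∂μ,
      (∀ i, 0 < v ω i) ∧ enorm' (v ω) = 1 ∧ ∀ᶠ n : ℕ in atTop, ∀ i j, 0 < Pp τ B n ω i j ∧
        |Pp τ B n ω i j / Pp τ B n ω i0 j - v ω i / v ω i0| ≤ Real.exp (-δ * n) := by
  have : Nonempty (Fin N) := ⟨i0⟩
  set Q := Pp τ B (e + 1) with hQ
  have hQm := Pp_meas hτ.measurable hBm (e + 1)
  set s : Ω → ℝ := fun ω => ∑ i, ∑ j, Q ω i j with hs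
  set l : Ω → ℝ := fun ω => ⨅ p : Fin N × Fin N, Q ω p.1 p.2 with hl
  have hQs : ∀ ω i j, Q ω i j ≤ s ω := by
    intro ω i j
    calc Q ω i j ≤ ∑ j, Q ω i j := Finset.single_le_sum (f := fun j => Q ω i j)
          (fun j _ => (hd ω i j).le) (Finset.mem_univ j)
      _ ≤ _ := Finset.single_le_sum (f := fun i => ∑ j, Q ω i j)
          (fun i _ => Finset.sum_nonneg fun j _ => (hd ω i j).le) (Finset.mem_univ i)
  have hspos : ∀ ω, 0 < s ω := fun ω => (hd ω i0 i0).trans_le (hQs ω i0 i0)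
  have hlQ : ∀ ω i j, l ω ≤ Q ω i j := fun ω i j =>
    ciInf_le (f := fun p : Fin N × Fin N => Q ω p.1 p.2) (Set.finite_range _).bddBelow (i, j)
  have hlpos : ∀ ω, 0 < l ω := by
    intro ω
    obtain ⟨p, hp⟩ := exists_eq_ciInf_of_finite (f := fun p : Fin N × Fin N => Q ω p.1 p.2)
    simp only [hl]
    rw [← hp]
    exact hd _ _ _
  set κ : Ω → ℝ := fun ω => l ω / s ω with hκ
  have hκpos : ∀ ω, 0 < κ ω := fun ω => div_pos (hlpos ω) (hspos ω)
  have hκ1 : ∀ ω, κ ω ≤ 1 := fun ω =>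
    (div_le_one (hspos ω)).2 ((hlQ ω i0 i0).trans (hQs ω i0 i0))
  have hκQ : ∀ ω k l' j, κ ω * Q ω l' j ≤ Q ω k j := by
    intro ω k l' j
    calc κ ω * Q ω l' j ≤ κ ω * s ω := by gcongr; exacts [(hκpos ω).le, hQs _ _ _]
      _ = l ω := by simp only [hκ]; exact div_mul_cancel₀ _ (hspos ω).ne'
      _ ≤ _ := hlQ _ _ _
  have hκm : Measurable κ := by
    refine Measurable.div ?_ ?_
    · exact Measurable.iInf fun p => hQm p.1 p.2
    · exact Finset.measurable_sum _ fun i _ => Finset.measurable_sum _ fun j _ => hQm i j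
  have hκi : Integrable κ μ := by
    refine Integrable.of_bound hκm.aestronglyMeasurable 1 (Filter.Eventually.of_forall fun ω => ?_)
    rw [Real.norm_eq_abs, abs_of_pos (hκpos ω)]
    exact hκ1 ω
  have hκint : 0 < ∫ ω, κ ω ∂μ := by
    rw [integral_pos_iff_support_of_nonneg (fun ω => (hκpos ω).le) hκi]
    have : Function.support κ = Set.univ := by
      ext ω; simp [(hκpos ω).ne']
    rw [this]; simp
  set a := ∫ ω, κ ω ∂μ with ha
  set R : Ω → Fin N → ℝ := fun ω i =>
    limsup (fun n => Pp τ B n ω i i0 / Pp τ B n ω i0 i0) atTop with hR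
  have hRm : Measurable R := by
    refine measurable_pi_iff.2 fun i => Measurable.limsup fun n => ?_
    exact (Pp_meas hτ.measurable hBm n i i0).div (Pp_meas hτ.measurable hBm n i0 i0)
  refine ⟨a / (2 * (e + 1)), by positivity, fun ω => (enorm' (R ω))⁻¹ • R ω, ?_, ?_⟩
  · exact ((enorm_meas.comp hRm).inv).smul hRm
  have hbirk := birkhoff hτ hκm hκi
  have hbirk' := (hτ.toMeasurePreserving.iterate (e + 1)).quasiMeasurePreserving.ae hbirk
  filter_upwards [hbirk'] with ω hω
  set P' : ℕ → Matrix (Fin N) (Fin N) ℝ := fun n => Pp τ B (n + (e + 1)) ω with hP'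
  have hP'pos : ∀ n i j, 0 < P' n i j := fun n => Pp_pos hB0 hBr hd _ (by omega) ω
  have hstep : ∀ n, P' (n + 1) = P' n * B (τ^[n + (e + 1)] ω) := by
    intro n
    simp only [hP']
    rw [show n + 1 + (e + 1) = (n + (e + 1)) + 1 by ring, Pp_add, Pp_one]
  have hblock : ∀ n, P' (n + (e + 1)) = P' n * Q (τ^[n] (τ^[e + 1] ω)) := by
    intro n
    simp only [hP']
    rw [Pp_add (n + (e + 1)) (e + 1), Function.iterate_add_apply]
  have hanti : Antitone fun n => tosc (P' n) i0 := by
    refine antitone_nat_of_succ_le fun n => ?_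
    have h := hP'pos (n + 1)
    rw [hstep n] at h ⊢
    simpa using cone_contract (κ := 0) le_rfl i0 (hP'pos n) h
      (fun k l j => by simpa using hB0 _ k j)
  have hcontr : ∀ n, tosc (P' (n + (e + 1))) i0 ≤ (1 - κ (τ^[n] (τ^[e + 1] ω))) * tosc (P' n) i0 := by
    intro n
    have h := hP'pos (n + (e + 1))
    rw [hblock n] at h ⊢
    exact cone_contract (hκpos _).le i0 (hP'pos n) h (hκQ _)
  have hexp := osc_exp (o := fun n => tosc (P' n) i0) (κ := fun n => κ (τ^[n] (τ^[e + 1] ω)))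
    (d := e) (fun n => tosc_nonneg _ _) hanti hcontr hκint hω (e + 1)
  obtain ⟨R', hR'pos, hR'⟩ := ratio_limit (P := P') (C := fun n => B (τ^[n + (e + 1)] ω)) i0 hP'pos
    (fun n => hB0 _) hstep
  have hconv : ∀ᶠ n : ℕ in atTop, ∀ i j, 0 < Pp τ B n ω i j ∧
        |Pp τ B n ω i j / Pp τ B n ω i0 j - R' i| ≤ Real.exp (-(a / (2 * (e + 1))) * n) := by
    obtain ⟨n0, hn0⟩ := eventually_atTop.1 hexp
    filter_upwards [eventually_ge_atTop (n0 + (e + 1))] with n hn i j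
    obtain ⟨k, rfl⟩ : ∃ k, n = k + (e + 1) := ⟨n - (e + 1), by omega⟩
    refine ⟨hP'pos k i j, (hR' k i j).trans ?_⟩
    exact hn0 k (by omega)
  have hto : Tendsto (fun n : ℕ => Real.exp (-(a / (2 * (e + 1))) * n)) atTop (nhds 0) := by
    refine Real.tendsto_exp_atBot.comp ?_
    refine Tendsto.const_mul_atTop_of_neg ?_ tendsto_natCast_atTop_atTop
    have : 0 < a / (2 * ((e:ℝ) + 1)) := by positivity
    linarith
  have hRR : R ω = R' := by
    funext i
    refine Tendsto.limsup_eq ?_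
    rw [tendsto_iff_dist_tendsto_zero]
    refine squeeze_zero' (Filter.Eventually.of_forall fun n => dist_nonneg) ?_ hto
    filter_upwards [hconv] with n hn
    exact (hn i i0).2
  have hR0 : R' i0 = 1 := by
    have h1 : Tendsto (fun n : ℕ => |1 - R' i0|) atTop (nhds |1 - R' i0|) := tendsto_const_nhds
    have h2 : Tendsto (fun n : ℕ => |1 - R' i0|) atTop (nhds 0) := by
      refine squeeze_zero' (Filter.Eventually.of_forall fun n => abs_nonneg _) ?_ hto
      filter_upwards [hconv] with n hn
      have := (hn i0 i0).2
      rwa [div_self (hn i0 i0).1.ne'] at this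
    have := tendsto_nhds_unique h1 h2
    rw [abs_eq_zero] at this
    linarith
  have hpos : 0 < enorm' R' := enorm_pos fun h => by
    have := congrFun h i0
    rw [hR0] at this
    simp at this
  rw [hRR]
  refine ⟨fun i => mul_pos (inv_pos.2 hpos) (hR'pos i), ?_, ?_⟩
  · rw [enorm_smul, abs_of_pos (inv_pos.2 hpos), inv_mul_cancel₀ hpos.ne']
  · filter_upwards [hconv] with n hn i j
    refine ⟨(hn i j).1, ?_⟩
    have e1 : ((enorm' R')⁻¹ • R') i / ((enorm' R')⁻¹ • R') i0 = R' i := by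
      simp only [Pi.smul_apply, smul_eq_mul, hR0]
      field_simp
    rw [e1]
    exact (hn i j).2

end rand
end LeslieAux


namespace LeslieAux

section inv
variable {Ω : Type*} [MeasurableSpace Ω] {μ : Measure Ω} [IsProbabilityMeasure μ]

lemma inv_set (θ : Equiv.Perm Ω) (h2 : Measurable θ.symm)
    (hmp : MeasurePreserving θ μ μ) (hmp' : MeasurePreserving θ.symm μ μ) {p : Ω → Prop}
    (hp : ∀ᵐ ω ∂μ, p ω) :
    ∃ Ω1 : Set Ω, MeasurableSet Ω1 ∧ (∀ ω, ω ∈ Ω1 ↔ θ ω ∈ Ω1) ∧ μ Ω1 = 1 ∧ ∀ ω ∈ Ω1, p ω := by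
  obtain ⟨G, hGp, hGm, hG⟩ : ∃ G : Set Ω, (∀ ω ∈ G, p ω) ∧ MeasurableSet G ∧ ∀ᵐ ω ∂μ, ω ∈ G := by
    obtain ⟨t, hts, htm, ht0⟩ := exists_measurable_superset_of_null (ae_iff.1 hp)
    refine ⟨tᶜ, fun ω hω => ?_, htm.compl, measure_eq_zero_iff_ae_notMem.1 ht0⟩
    by_contra hc
    exact hω (hts hc)
  refine ⟨(⋂ k : ℕ, (θ : Ω → Ω)^[k] ⁻¹' G) ∩ (⋂ k : ℕ, (θ.symm : Ω → Ω)^[k] ⁻¹' G), ?_, ?_, ?_, ?_⟩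
  · exact (MeasurableSet.iInter fun k => (hmp.measurable.iterate k) hGm).inter
      (MeasurableSet.iInter fun k => (h2.iterate k) hGm)
  · intro ω
    simp only [Set.mem_inter_iff, Set.mem_iInter, Set.mem_preimage]
    constructor
    · rintro ⟨a, b⟩
      refine ⟨fun k => ?_, fun k => ?_⟩
      · have := a (k + 1); rwa [Function.iterate_succ_apply] at this
      · cases k with
        | zero => exact a 1
        | succ k => rw [Function.iterate_succ_apply, Equiv.symm_apply_apply]; exact b k
    · rintro ⟨a, b⟩
      refine ⟨fun k => ?_, fun k => ?_⟩
      · cases k with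
        | zero => have := b 1; simpa using this
        | succ k => rw [Function.iterate_succ_apply]; exact a k
      · have := b (k + 1); rwa [Function.iterate_succ_apply, Equiv.symm_apply_apply] at this
  · have : ∀ᵐ ω ∂μ, ω ∈ (⋂ k : ℕ, (θ : Ω → Ω)^[k] ⁻¹' G) ∩ (⋂ k : ℕ, (θ.symm : Ω → Ω)^[k] ⁻¹' G) := by
      have a : ∀ᵐ ω ∂μ, ∀ k : ℕ, (θ : Ω → Ω)^[k] ω ∈ G := by
        rw [ae_all_iff]; intro k
        exact (hmp.iterate k).quasiMeasurePreserving.ae hG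
      have b : ∀ᵐ ω ∂μ, ∀ k : ℕ, (θ.symm : Ω → Ω)^[k] ω ∈ G := by
        rw [ae_all_iff]; intro k
        exact (hmp'.iterate k).quasiMeasurePreserving.ae hG
      filter_upwards [a, b] with ω ha hb
      simp only [Set.mem_inter_iff, Set.mem_iInter, Set.mem_preimage]
      exact ⟨ha, hb⟩
    refine (mem_ae_iff_prob_eq_one ?_).1 this
    exact (MeasurableSet.iInter fun k => (hmp.measurable.iterate k) hGm).inter
      (MeasurableSet.iInter fun k => (h2.iterate k) hGm)
  · rintro ω ⟨a, _⟩
    exact hGp ω (Set.mem_iInter.1 a 0)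

end inv

section sprod
variable {Ω : Type*} {N : ℕ} {θ : Equiv.Perm Ω} {S : Ω → Matrix (Fin N) (Fin N) ℝ}

lemma Sprod_one (ω : Ω) : Sprod θ S 1 ω = S ω := by simp [Sprod]

lemma Sprod_add (n m : ℕ) : ∀ ω, Sprod θ S (n + m) ω =
    Sprod θ S m ((θ : Ω → Ω)^[n] ω) * Sprod θ S n ω := by
  induction n with
  | zero => intro ω; simp [Sprod]
  | succ n ih =>
    intro ω
    rw [show n + 1 + m = (n + m) + 1 by ring, Sprod, Sprod, ih, Matrix.mul_assoc,
      Function.iterate_succ_apply]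

lemma Pp_transpose (n : ℕ) : ∀ ω, Pp (θ : Ω → Ω) (fun ω => (S ω)ᵀ) n ω = (Sprod θ S n ω)ᵀ := by
  induction n with
  | zero => intro ω; simp [Sprod, Pp]
  | succ n ih => intro ω; rw [Pp, Sprod, ih, Matrix.transpose_mul]

lemma Pp_symm (n : ℕ) : ∀ ω, Pp (θ.symm : Ω → Ω) (fun ω => S (θ.symm ω)) n ω =
    Sprod θ S n ((θ.symm : Ω → Ω)^[n] ω) := by
  induction n with
  | zero => intro ω; simp [Sprod, Pp]
  | succ n ih =>
    intro ω
    rw [Pp_add, Pp_one, Sprod, ih]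
    simp only [Function.iterate_succ_apply', Equiv.apply_symm_apply]

lemma Sprod_nonneg (h0 : ∀ ω i j, 0 ≤ S ω i j) (n : ℕ) : ∀ ω i j, 0 ≤ Sprod θ S n ω i j := by
  induction n with
  | zero => intro ω i j; simp only [Sprod, Matrix.one_apply]; split_ifs <;> simp
  | succ n ih =>
    intro ω i j
    rw [Sprod, Matrix.mul_apply]
    exact Finset.sum_nonneg fun k _ => mul_nonneg (ih _ _ _) (h0 _ _ _)

lemma Sprod_pos (h0 : ∀ ω i j, 0 ≤ S ω i j) (hN : 0 < N)
    (hrow : ∀ ω j, 0 < S ω ⟨0, hN⟩ j)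
    (hsub : ∀ ω (i j : Fin N), (i : ℕ) = j + 1 → 0 < S ω i j) (n : ℕ) :
    ∀ ω (i j : Fin N), ((i : ℕ) < n ∨ (i : ℕ) = j + n) → 0 < Sprod θ S n ω i j := by
  induction n with
  | zero =>
    intro ω i j h
    have : i = j := by ext; omega
    subst this; simp [Sprod]
  | succ n ih =>
    intro ω i j h
    rw [Sprod, Matrix.mul_apply]
    have key : ∃ k, 0 < Sprod θ S n (θ ω) i k * S ω k j := by
      rcases h with h | h
      · refine ⟨⟨0, hN⟩, mul_pos (ih _ _ _ ?_) (hrow _ _)⟩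
        simp only; omega
      · refine ⟨⟨j + 1, by omega⟩, mul_pos (ih _ _ _ ?_) (hsub _ _ _ rfl)⟩
        simp only; omega
    obtain ⟨k, hk⟩ := key
    exact Finset.sum_pos' (fun l _ => mul_nonneg (Sprod_nonneg h0 n _ _ _) (h0 _ _ _))
      ⟨k, Finset.mem_univ k, hk⟩

lemma Sprod_inj (hinj : ∀ ω u, S ω *ᵥ u = 0 → u = 0) (n : ℕ) : ∀ ω u,
    Sprod θ S n ω *ᵥ u = 0 → u = 0 := by
  induction n with
  | zero => intro ω u h; simpa [Sprod] using h
  | succ n ih =>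
    intro ω u h
    rw [Sprod, ← Matrix.mulVec_mulVec] at h
    exact hinj _ _ (ih _ _ h)

lemma Sprod_meas [MeasurableSpace Ω] (hθ : Measurable θ)
    (hS : ∀ i j, Measurable fun ω => S ω i j) (n : ℕ) :
    ∀ i j, Measurable fun ω => Sprod θ S n ω i j := by
  induction n with
  | zero => intro i j; exact measurable_const
  | succ n ih =>
    intro i j
    simp only [Sprod, Matrix.mul_apply]
    exact Finset.measurable_sum _ fun k _ => ((ih i k).comp hθ).mul (hS k j)

end sprod

section mat
variable {N : ℕ}

/-- Sum of absolute values of entries. -/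
noncomputable def nrm (M : Matrix (Fin N) (Fin N) ℝ) : ℝ := ∑ i, ∑ j, |M i j|

/-- orthogonal projection along a unit vector -/
noncomputable def proj (a : Fin N → ℝ) : Matrix (Fin N) (Fin N) ℝ := 1 - vecMulVec a a

lemma nrm_nonneg (M : Matrix (Fin N) (Fin N) ℝ) : 0 ≤ nrm M :=
  Finset.sum_nonneg fun _ _ => Finset.sum_nonneg fun _ _ => abs_nonneg _

lemma abs_le_nrm (M : Matrix (Fin N) (Fin N) ℝ) (i j : Fin N) : |M i j| ≤ nrm M :=
  (Finset.single_le_sum (f := fun j => |M i j|) (fun j _ => abs_nonneg _) (Finset.mem_univ j)).trans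
    (Finset.single_le_sum (f := fun i => ∑ j, |M i j|)
      (fun i _ => Finset.sum_nonneg fun _ _ => abs_nonneg _) (Finset.mem_univ i))

lemma nrm_pos {M : Matrix (Fin N) (Fin N) ℝ} (h : M ≠ 0) : 0 < nrm M := by
  rcases (nrm_nonneg M).lt_or_eq with h' | h'
  · exact h'
  · exfalso
    apply h
    ext i j
    have := abs_le_nrm M i j
    rw [← h'] at this
    simpa using this

lemma nrm_mul (A B : Matrix (Fin N) (Fin N) ℝ) : nrm (A * B) ≤ nrm A * nrm B := by
  calc nrm (A * B) ≤ ∑ i, ∑ j, ∑ k, |A i k| * |B k j| := by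
        refine Finset.sum_le_sum fun i _ => Finset.sum_le_sum fun j _ => ?_
        rw [Matrix.mul_apply]
        refine (Finset.abs_sum_le_sum_abs _ _).trans (le_of_eq ?_)
        exact Finset.sum_congr rfl fun k _ => abs_mul _ _
    _ = ∑ i, ∑ k, |A i k| * ∑ j, |B k j| := by
        refine Finset.sum_congr rfl fun i _ => ?_
        rw [Finset.sum_comm]
        exact Finset.sum_congr rfl fun k _ => (Finset.mul_sum _ _ _).symm
    _ ≤ ∑ i, ∑ k, |A i k| * nrm B := by
        refine Finset.sum_le_sum fun i _ => Finset.sum_le_sum fun k _ => ?_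
        gcongr
        exact Finset.single_le_sum (f := fun i => ∑ j, |B i j|)
          (fun i _ => Finset.sum_nonneg fun _ _ => abs_nonneg _) (Finset.mem_univ k)
    _ = _ := by
        rw [show nrm A = ∑ i, ∑ j, |A i j| from rfl, Finset.sum_mul]
        exact Finset.sum_congr rfl fun i _ => (Finset.sum_mul _ _ _).symm

lemma nrm_le {M : Matrix (Fin N) (Fin N) ℝ} {c : ℝ} (h : ∀ i j, |M i j| ≤ c) :
    nrm M ≤ N * (N * c) := by
  calc nrm M ≤ ∑ _i : Fin N, ∑ _j : Fin N, c :=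
        Finset.sum_le_sum fun i _ => Finset.sum_le_sum fun j _ => h i j
    _ = _ := by simp

lemma proj_mul {a : Fin N → ℝ} {X : Matrix (Fin N) (Fin N) ℝ} (h : a ᵥ* X = 0) :
    proj a * X = X := by
  rw [proj, Matrix.sub_mul, Matrix.one_mul, Matrix.vecMulVec_mul, h]
  ext i j
  simp [vecMulVec]

lemma unit_dot {a : Fin N → ℝ} (h : enorm' a = 1) : a ⬝ᵥ a = 1 := by
  have : ∑ i, a i ^ 2 = 1 := by
    have h2 := h
    rw [enorm', Real.sqrt_eq_one] at h2
    exact h2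
  rw [dotProduct, ← this]
  exact Finset.sum_congr rfl fun i _ => (sq _).symm

lemma vec_proj {a : Fin N → ℝ} (h : enorm' a = 1) : a ᵥ* proj a = 0 := by
  rw [proj, Matrix.vecMul_sub, Matrix.vecMul_one, Matrix.vecMul_vecMulVec, unit_dot h]
  simp

lemma proj_vec {a u : Fin N → ℝ} (h : a ⬝ᵥ u = 0) : proj a *ᵥ u = u := by
  rw [proj, Matrix.sub_mulVec, Matrix.one_mulVec, Matrix.vecMulVec_mulVec, h]
  simp

lemma enorm_mulVec_le (M : Matrix (Fin N) (Fin N) ℝ) (u : Fin N → ℝ) :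
    enorm' (M *ᵥ u) ≤ nrm M * enorm' u := by
  refine (enorm_le_sum _).trans ?_
  rw [nrm, Finset.sum_mul]
  refine Finset.sum_le_sum fun i _ => ?_
  rw [Matrix.mulVec, dotProduct, Finset.sum_mul]
  refine (Finset.abs_sum_le_sum_abs _ _).trans (Finset.sum_le_sum fun j _ => ?_)
  rw [abs_mul]
  gcongr
  exact abs_le_enorm u j

lemma restr_bdd (M : Matrix (Fin N) (Fin N) ℝ) (F : Set (Fin N → ℝ)) :
    BddAbove {c : ℝ | ∃ u ∈ F, enorm' u ≤ 1 ∧ c = enorm' (M.mulVec u)} := by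
  refine ⟨nrm M, ?_⟩
  rintro c ⟨u, _, hu, rfl⟩
  refine (enorm_mulVec_le M u).trans ?_
  have := nrm_nonneg M
  nlinarith

lemma restr_le (M : Matrix (Fin N) (Fin N) ℝ) (a : Fin N → ℝ) :
    restrNorm M {u : Fin N → ℝ | ∑ i, u i * a i = 0} ≤ nrm (M * proj a) := by
  refine csSup_le ⟨_, 0, by simp, by simp [enorm_zero], rfl⟩ ?_
  rintro c ⟨u, hu, hu1, rfl⟩
  have hu' : a ⬝ᵥ u = 0 := by
    rw [dotProduct_comm]; exact hu
  have : M *ᵥ u = (M * proj a) *ᵥ u := by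
    rw [← Matrix.mulVec_mulVec, proj_vec hu']
  rw [this]
  refine (enorm_mulVec_le _ u).trans ?_
  have := nrm_nonneg (M * proj a)
  nlinarith

lemma le_restr (M : Matrix (Fin N) (Fin N) ℝ) (a : Fin N → ℝ) {u : Fin N → ℝ}
    (hu : a ⬝ᵥ u = 0) :
    enorm' (M *ᵥ u) ≤ enorm' u * restrNorm M {u : Fin N → ℝ | ∑ i, u i * a i = 0} := by
  by_cases h0 : u = 0
  · subst h0; simp [enorm_zero]
  have hp := enorm_pos h0
  have : enorm' (M *ᵥ ((enorm' u)⁻¹ • u)) ≤ restrNorm M {u : Fin N → ℝ | ∑ i, u i * a i = 0} := by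
    refine le_csSup (restr_bdd _ _) ⟨(enorm' u)⁻¹ • u, ?_, ?_, rfl⟩
    · have : a ⬝ᵥ ((enorm' u)⁻¹ • u) = 0 := by rw [dotProduct_smul, hu, smul_zero]
      rw [dotProduct_comm] at this
      exact this
    · rw [enorm_smul, abs_of_pos (inv_pos.2 hp), inv_mul_cancel₀ hp.ne']
  rw [Matrix.mulVec_smul, enorm_smul, abs_of_pos (inv_pos.2 hp), inv_mul_le_iff₀ hp] at this
  exact this

lemma nrm_le_restr {a : Fin N → ℝ} (ha : enorm' a = 1) : ∃ C : ℝ,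
    ∀ M : Matrix (Fin N) (Fin N) ℝ,
    nrm (M * proj a) ≤ C * restrNorm M {u : Fin N → ℝ | ∑ i, u i * a i = 0} := by
  refine ⟨∑ j, N * enorm' (fun k => proj a k j), fun M => ?_⟩
  rw [nrm, Finset.sum_comm, Finset.sum_mul]
  refine Finset.sum_le_sum fun j _ => ?_
  have e : ∀ i, (M * proj a) i j = (M *ᵥ (fun k => proj a k j)) i := fun i => by
    rw [Matrix.mul_apply]; rfl
  have h0 : a ⬝ᵥ (fun k => proj a k j) = 0 := congrFun (vec_proj ha) j
  calc ∑ i, |(M * proj a) i j| ≤ ∑ _i : Fin N, enorm' (M *ᵥ (fun k => proj a k j)) := by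
        refine Finset.sum_le_sum fun i _ => ?_
        rw [e i]; exact abs_le_enorm _ i
    _ = N * enorm' (M *ᵥ (fun k => proj a k j)) := by simp
    _ ≤ N * (enorm' (fun k => proj a k j) *
          restrNorm M {u : Fin N → ℝ | ∑ i, u i * a i = 0}) := by
        gcongr; exact le_restr M a h0
    _ = _ := by ring

lemma proj_ne_zero (hN : 2 ≤ N) {a : Fin N → ℝ} (ha : ∀ i, 0 < a i) : proj a ≠ 0 := by
  intro h
  have := congrFun (congrFun h ⟨0, by omega⟩) ⟨1, by omega⟩
  simp [proj, vecMulVec, Matrix.one_apply] at this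
  rcases this with h | h
  · exact (ha _).ne' h
  · exact (ha _).ne' h

lemma proj_entry {a : Fin N → ℝ} (ha : enorm' a = 1) (i j : Fin N) : |proj a i j| ≤ 2 := by
  have h1 := abs_le_enorm a i
  have h2 := abs_le_enorm a j
  rw [ha] at h1 h2
  rw [proj, Matrix.sub_apply, vecMulVec_apply]
  have h3 : |a i * a j| ≤ 1 := by
    rw [abs_mul]
    exact mul_le_one₀ h1 (abs_nonneg _) h2
  have h4 : |(1 : Matrix (Fin N) (Fin N) ℝ) i j| ≤ 1 := by
    rw [Matrix.one_apply]; split_ifs <;> simp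
  calc _ ≤ |(1 : Matrix (Fin N) (Fin N) ℝ) i j| + |a i * a j| := abs_sub _ _
    _ ≤ 2 := by linarith

end mat
end LeslieAux

namespace LeslieAux

/-- Pointwise properties of the principal vectors. -/
def Gd {Ω : Type*} {N : ℕ} (θ : Equiv.Perm Ω) (S : Ω → Matrix (Fin N) (Fin N) ℝ) (i0 : Fin N)
    (δ : ℝ) (w ws : Ω → Fin N → ℝ) (ω : Ω) : Prop :=
  (∀ i, 0 < w ω i) ∧ enorm' (w ω) = 1 ∧ (∀ i, 0 < ws ω i) ∧ enorm' (ws ω) = 1 ∧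
  (∃ c : ℝ, 0 < c ∧ S ω *ᵥ w ω = c • w (θ ω)) ∧
  (∃ c : ℝ, 0 < c ∧ ws (θ ω) ᵥ* S ω = c • ws ω) ∧
  ∀ᶠ n : ℕ in atTop, ∀ i j, 0 < Sprod θ S n ω j i ∧
    |Sprod θ S n ω j i / Sprod θ S n ω j i0 - ws ω i / ws ω i0| ≤ Real.exp (-δ * n)

theorem exists_good {N : ℕ} {Ω : Type*} [MeasurableSpace Ω] {μ : Measure Ω}
    [IsProbabilityMeasure μ] (θ : Equiv.Perm Ω) (h1 : Measurable θ) (h2 : Measurable θ.symm)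
    (herg : Ergodic (θ : Ω → Ω) μ) (herg' : Ergodic (θ.symm : Ω → Ω) μ)
    (S : Ω → Matrix (Fin N) (Fin N) ℝ) (hSm : ∀ i j, Measurable fun ω => S ω i j)
    (h0 : ∀ ω i j, 0 ≤ S ω i j) (hr : ∀ ω i, ∃ j, 0 < S ω i j) (hc : ∀ ω j, ∃ i, 0 < S ω i j)
    {e : ℕ} (hpos : ∀ ω i j, 0 < Sprod θ S (e + 1) ω i j) (i0 : Fin N) :
    ∃ δ : ℝ, 0 < δ ∧ ∃ w ws : Ω → Fin N → ℝ, Measurable w ∧ Measurable ws ∧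
      ∃ Ω1 : Set Ω, MeasurableSet Ω1 ∧ (∀ ω, ω ∈ Ω1 ↔ θ ω ∈ Ω1) ∧ μ Ω1 = 1 ∧
        ∀ ω ∈ Ω1, Gd θ S i0 δ w ws ω := by
  obtain ⟨δ1, hδ1, w, hw, hwG⟩ := random_cone (B := fun ω => S (θ.symm ω)) herg'
    (fun i j => (hSm i j).comp h2) (fun ω => h0 _) (fun ω => hr _) (e := e)
    (fun ω i j => by rw [Pp_symm]; exact hpos _ _ _) i0
  obtain ⟨δ, hδ, ws, hws, hwsG⟩ := random_cone (B := fun ω => (S ω)ᵀ) herg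
    (fun i j => hSm j i) (fun ω i j => h0 _ _ _) (fun ω i => hc _ _) (e := e)
    (fun ω i j => by rw [Pp_transpose]; exact hpos _ _ _) i0
  obtain ⟨Ω1, hm, hinv, hP, hG⟩ := inv_set θ h2 herg.toMeasurePreserving
    herg'.toMeasurePreserving (hwG.and hwsG)
  refine ⟨δ, hδ, w, ws, hw, hws, Ω1, hm, hinv, hP, fun ω hω => ?_⟩
  obtain ⟨⟨a1, a2, a3⟩, b1, b2, b3⟩ := hG ω hω
  obtain ⟨⟨c1, c2, c3⟩, d1, d2, d3⟩ := hG (θ ω) ((hinv ω).1 hω)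
  refine ⟨a1, a2, b1, b2, ?_, ?_, ?_⟩
  · have := equivariant (τ := (θ.symm : Ω → Ω)) (B := fun ω => S (θ.symm ω)) (ω := θ ω)
      (fun ω => h0 _) (fun ω => hr _) i0 hδ1 c1 (by simpa using a1) c3
      (by simpa using a3)
    simpa using this
  · have := equivariant (τ := (θ : Ω → Ω)) (B := fun ω => (S ω)ᵀ) (ω := ω)
      (fun ω i j => h0 _ _ _) (fun ω i => hc _ _) i0 hδ b1 d1 b3 d3
    simpa [Matrix.mulVec_transpose] using this
  · filter_upwards [b3] with n hn i j
    have := hn i j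
    simpa only [Pp_transpose, Matrix.transpose_apply] using this

section good
variable {Ω : Type*} {N : ℕ} {θ : Equiv.Perm Ω} {S : Ω → Matrix (Fin N) (Fin N) ℝ} {i0 : Fin N}
  {δ : ℝ} {w ws : Ω → Fin N → ℝ} {Ω1 : Set Ω}

lemma iter_mem (hinv : ∀ ω, ω ∈ Ω1 ↔ θ ω ∈ Ω1) (n : ℕ) : ∀ ω ∈ Ω1, (θ : Ω → Ω)^[n] ω ∈ Ω1 := by
  induction n with
  | zero => intro ω h; exact h
  | succ n ih => intro ω h; rw [Function.iterate_succ_apply]; exact ih _ ((hinv ω).1 h)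

lemma w_iter (hinv : ∀ ω, ω ∈ Ω1 ↔ θ ω ∈ Ω1) (hG : ∀ ω ∈ Ω1, Gd θ S i0 δ w ws ω) (n : ℕ) :
    ∀ ω ∈ Ω1, ∃ c : ℝ, 0 < c ∧ Sprod θ S n ω *ᵥ w ω = c • w ((θ : Ω → Ω)^[n] ω) := by
  induction n with
  | zero => intro ω _; exact ⟨1, one_pos, by simp [Sprod]⟩
  | succ n ih =>
    intro ω hω
    obtain ⟨c, hc, e⟩ := ih _ ((hinv ω).1 hω)
    obtain ⟨d, hd, e'⟩ := (hG ω hω).2.2.2.2.1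
    refine ⟨d * c, mul_pos hd hc, ?_⟩
    rw [Sprod, ← Matrix.mulVec_mulVec, e', Matrix.mulVec_smul, e, smul_smul,
      Function.iterate_succ_apply]

lemma ws_iter (hinv : ∀ ω, ω ∈ Ω1 ↔ θ ω ∈ Ω1) (hG : ∀ ω ∈ Ω1, Gd θ S i0 δ w ws ω) (n : ℕ) :
    ∀ ω ∈ Ω1, ∃ c : ℝ, 0 < c ∧ ws ((θ : Ω → Ω)^[n] ω) ᵥ* Sprod θ S n ω = c • ws ω := by
  induction n with
  | zero => intro ω _; exact ⟨1, one_pos, by simp [Sprod]⟩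
  | succ n ih =>
    intro ω hω
    obtain ⟨c, hc, e⟩ := ih _ ((hinv ω).1 hω)
    obtain ⟨d, hd, e'⟩ := (hG ω hω).2.2.2.2.2.1
    refine ⟨c * d, mul_pos hc hd, ?_⟩
    rw [Sprod, ← Matrix.vecMul_vecMul, Function.iterate_succ_apply, e, Matrix.smul_vecMul, e',
      smul_smul]

/-- growth of the principal vector -/
noncomputable def En (θ : Equiv.Perm Ω) (S : Ω → Matrix (Fin N) (Fin N) ℝ) (w : Ω → Fin N → ℝ)
    (n : ℕ) (ω : Ω) : ℝ := enorm' (Sprod θ S n ω *ᵥ w ω)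

lemma En_pos (hinv : ∀ ω, ω ∈ Ω1 ↔ θ ω ∈ Ω1) (hG : ∀ ω ∈ Ω1, Gd θ S i0 δ w ws ω) (n : ℕ)
    {ω : Ω} (hω : ω ∈ Ω1) : 0 < En θ S w n ω := by
  obtain ⟨c, hc, e⟩ := w_iter hinv hG n ω hω
  rw [En, e, enorm_smul, (hG _ (iter_mem hinv n ω hω)).2.1, abs_of_pos hc]
  linarith

lemma En_add (hinv : ∀ ω, ω ∈ Ω1 ↔ θ ω ∈ Ω1) (hG : ∀ ω ∈ Ω1, Gd θ S i0 δ w ws ω) (n m : ℕ)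
    {ω : Ω} (hω : ω ∈ Ω1) :
    En θ S w (n + m) ω = En θ S w n ω * En θ S w m ((θ : Ω → Ω)^[n] ω) := by
  obtain ⟨c, hc, e⟩ := w_iter hinv hG n ω hω
  rw [En, En, En, Sprod_add, ← Matrix.mulVec_mulVec, e, Matrix.mulVec_smul, enorm_smul, enorm_smul,
    (hG _ (iter_mem hinv n ω hω)).2.1, mul_one]

lemma log_En (hinv : ∀ ω, ω ∈ Ω1 ↔ θ ω ∈ Ω1) (hG : ∀ ω ∈ Ω1, Gd θ S i0 δ w ws ω) (n : ℕ)
    {ω : Ω} (hω : ω ∈ Ω1) :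
    Real.log (En θ S w n ω) = birkhoffSum (θ : Ω → Ω) (fun ω => Real.log (En θ S w 1 ω)) n ω := by
  induction n with
  | zero => simp [En, Sprod, (hG ω hω).2.1]
  | succ n ih =>
    rw [En_add hinv hG n 1 hω, Real.log_mul (En_pos hinv hG n hω).ne'
      (En_pos hinv hG 1 (iter_mem hinv n ω hω)).ne', birkhoffSum_succ, ih]

lemma En_meas [MeasurableSpace Ω] (hθ : Measurable θ)
    (hS : ∀ i j, Measurable fun ω => S ω i j) (hw : Measurable w) (n : ℕ) :
    Measurable (En θ S w n) := by
  refine enorm_meas.comp (measurable_pi_lambda _ fun i => ?_)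
  simp only [Matrix.mulVec, dotProduct]
  exact Finset.measurable_sum _ fun k _ =>
    (Sprod_meas hθ hS n i k).mul ((measurable_pi_apply k).comp hw)

/-- growth on the complementary subspace -/
noncomputable def Hn (θ : Equiv.Perm Ω) (S : Ω → Matrix (Fin N) (Fin N) ℝ) (ws : Ω → Fin N → ℝ)
    (n : ℕ) (ω : Ω) : ℝ := nrm (Sprod θ S n ω * proj (ws ω))

lemma Hn_meas [MeasurableSpace Ω] (hθ : Measurable θ)
    (hS : ∀ i j, Measurable fun ω => S ω i j) (hws : Measurable ws) (n : ℕ) :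
    Measurable (Hn θ S ws n) := by
  have : Hn θ S ws n = fun ω => ∑ i, ∑ j, |∑ k, Sprod θ S n ω i k *
      ((1 : Matrix (Fin N) (Fin N) ℝ) k j - ws ω k * ws ω j)| := by
    ext ω
    simp only [Hn, nrm, proj, Matrix.mul_apply, Matrix.sub_apply, vecMulVec_apply]
  rw [this]
  refine Finset.measurable_sum _ fun i _ => Finset.measurable_sum _ fun j _ => ?_
  have h : Measurable fun ω => ∑ k, Sprod θ S n ω i k *
      ((1 : Matrix (Fin N) (Fin N) ℝ) k j - ws ω k * ws ω j) := by
    refine Finset.measurable_sum _ fun k _ => (Sprod_meas hθ hS n i k).mul ?_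
    exact measurable_const.sub (((measurable_pi_apply k).comp hws).mul
      ((measurable_pi_apply j).comp hws))
  exact continuous_abs.measurable.comp h

lemma Hn_pos (hN : 2 ≤ N) (hinj : ∀ ω u, S ω *ᵥ u = 0 → u = 0)
    (hG : ∀ ω ∈ Ω1, Gd θ S i0 δ w ws ω) (n : ℕ) {ω : Ω} (hω : ω ∈ Ω1) : 0 < Hn θ S ws n ω := by
  refine nrm_pos fun h => proj_ne_zero hN (hG ω hω).2.2.1 ?_
  ext i j
  have : Sprod θ S n ω *ᵥ (fun k => proj (ws ω) k j) = 0 := by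
    ext i
    have := congrFun (congrFun h i) j
    rw [Matrix.mul_apply] at this
    exact this
  exact congrFun (Sprod_inj hinj n ω _ this) i

lemma Hn_sub (hinv : ∀ ω, ω ∈ Ω1 ↔ θ ω ∈ Ω1) (hG : ∀ ω ∈ Ω1, Gd θ S i0 δ w ws ω) (n m : ℕ)
    {ω : Ω} (hω : ω ∈ Ω1) :
    Hn θ S ws (n + m) ω ≤ Hn θ S ws n ω * Hn θ S ws m ((θ : Ω → Ω)^[n] ω) := by
  obtain ⟨c, hc, e⟩ := ws_iter hinv hG n ω hω
  have h : ws ((θ : Ω → Ω)^[n] ω) ᵥ* (Sprod θ S n ω * proj (ws ω)) = 0 := by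
    rw [← Matrix.vecMul_vecMul, e, Matrix.smul_vecMul, vec_proj (hG ω hω).2.2.2.1, smul_zero]
  rw [Hn, Hn, Hn, Sprod_add, Matrix.mul_assoc, ← proj_mul h, ← Matrix.mul_assoc, mul_comm]
  refine (nrm_mul _ _).trans ?_
  rw [proj_mul h]

lemma Hn_decay (h0 : ∀ ω i j, 0 ≤ S ω i j) (hG : ∀ ω ∈ Ω1, Gd θ S i0 δ w ws ω)
    {ω : Ω} (hω : ω ∈ Ω1) : ∃ K : ℝ, 0 < K ∧ ∀ᶠ n : ℕ in atTop,
      Hn θ S ws n ω ≤ K * Real.exp (-δ * n) * En θ S w n ω := by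
  obtain ⟨w1, _, s1, s2, _, _, hev⟩ := hG ω hω
  refine ⟨N * (N * (2 * N / w ω i0)) + 1, ?_, ?_⟩
  · have := w1 i0
    positivity
  filter_upwards [hev] with n hn
  set M := Sprod θ S n ω with hM
  have hE : ∀ j, M j i0 ≤ En θ S w n ω / w ω i0 := by
    intro j
    rw [le_div_iff₀ (w1 i0)]
    calc M j i0 * w ω i0 ≤ (M *ᵥ w ω) j :=
          Finset.single_le_sum (f := fun k => M j k * w ω k)
            (fun k _ => mul_nonneg (hn k j).1.le (w1 k).le) (Finset.mem_univ i0)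
      _ ≤ _ := (le_abs_self _).trans (abs_le_enorm _ j)
  have hEn : 0 ≤ En θ S w n ω := enorm_nonneg _
  have key : ∀ j l, |(M * proj (ws ω)) j l| ≤
      2 * N / w ω i0 * Real.exp (-δ * n) * En θ S w n ω := by
    intro j l
    have hz : ∑ k, ws ω k * proj (ws ω) k l = 0 := congrFun (vec_proj s2) l
    have hz2 : ∑ k, (ws ω k / ws ω i0) * proj (ws ω) k l = 0 := by
      have : ∑ k, (ws ω k / ws ω i0) * proj (ws ω) k l =
          (∑ k, ws ω k * proj (ws ω) k l) / ws ω i0 := by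
        rw [Finset.sum_div]
        exact Finset.sum_congr rfl fun k _ => by ring
      rw [this, hz, zero_div]
    have e1 : (M * proj (ws ω)) j l =
        M j i0 * ∑ k, (M j k / M j i0 - ws ω k / ws ω i0) * proj (ws ω) k l := by
      have hp := (hn i0 j).1.ne'
      simp only [sub_mul]
      rw [Finset.sum_sub_distrib, hz2, sub_zero, Finset.mul_sum, Matrix.mul_apply]
      refine Finset.sum_congr rfl fun k _ => ?_
      field_simp
    rw [e1, abs_mul, abs_of_pos (hn i0 j).1]
    have e2 : |∑ k, (M j k / M j i0 - ws ω k / ws ω i0) * proj (ws ω) k l| ≤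
        N * (Real.exp (-δ * n) * 2) := by
      refine (Finset.abs_sum_le_sum_abs _ _).trans ?_
      calc _ ≤ ∑ _k : Fin N, Real.exp (-δ * n) * 2 := by
            refine Finset.sum_le_sum fun k _ => ?_
            rw [abs_mul]
            exact mul_le_mul (hn k j).2 (proj_entry s2 k l) (abs_nonneg _) (Real.exp_pos _).le
        _ = _ := by simp
    calc _ ≤ (En θ S w n ω / w ω i0) * (N * (Real.exp (-δ * n) * 2)) :=
          mul_le_mul (hE j) e2 (abs_nonneg _) (div_nonneg hEn (w1 i0).le)
      _ = _ := by ring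
  refine (nrm_le key).trans ?_
  have : 0 ≤ Real.exp (-δ * n) * En θ S w n ω := mul_nonneg (Real.exp_pos _).le hEn
  nlinarith

end good
end LeslieAux

namespace LeslieAux
section limits
variable {Ω : Type*} {N : ℕ} {θ : Equiv.Perm Ω} {S : Ω → Matrix (Fin N) (Fin N) ℝ} {i0 : Fin N}
  {δ : ℝ} {w ws : Ω → Fin N → ℝ} {Ω1 : Set Ω}

lemma sum_ge_one {u : Fin N → ℝ} (h : ∀ i, 0 < u i) (h1 : enorm' u = 1) : 1 ≤ ∑ i, u i := by
  have := enorm_le_sum u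
  rw [h1] at this
  refine this.trans (le_of_eq (Finset.sum_congr rfl fun i _ => abs_of_pos (h i)))

lemma En_one_lower (hG : ∀ ω ∈ Ω1, Gd θ S i0 δ w ws ω) {a : Ω → ℝ} (ha : ∀ ω, 0 < a ω)
    (haS : ∀ ω j, a ω ≤ S ω i0 j) {ω : Ω} (hω : ω ∈ Ω1) : a ω ≤ En θ S w 1 ω := by
  obtain ⟨w1, w2, _⟩ := hG ω hω
  rw [En, Sprod_one]
  refine le_trans ?_ ((le_abs_self _).trans (abs_le_enorm _ i0))
  calc a ω ≤ a ω * ∑ i, w ω i := le_mul_of_one_le_right (ha ω).le (sum_ge_one w1 w2)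
    _ = ∑ i, a ω * w ω i := Finset.mul_sum _ _ _
    _ ≤ _ := Finset.sum_le_sum fun i _ => mul_le_mul_of_nonneg_right (haS ω i) (w1 i).le

lemma En_one_upper (hG : ∀ ω ∈ Ω1, Gd θ S i0 δ w ws ω) {A : Ω → ℝ}
    (hA : ∀ ω i j, |S ω i j| ≤ A ω) {ω : Ω} (hω : ω ∈ Ω1) :
    En θ S w 1 ω ≤ N * (N * A ω) := by
  obtain ⟨w1, w2, _⟩ := hG ω hω
  rw [En, Sprod_one]
  refine (enorm_mulVec_le _ _).trans ?_
  rw [w2, mul_one]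
  exact nrm_le (hA ω)

lemma Hn_one_upper (hG : ∀ ω ∈ Ω1, Gd θ S i0 δ w ws ω) {A : Ω → ℝ}
    (hA : ∀ ω i j, |S ω i j| ≤ A ω) {ω : Ω} (hω : ω ∈ Ω1) :
    Hn θ S ws 1 ω ≤ (N * (N * A ω)) * (N * (N * 2)) := by
  obtain ⟨_, _, s1, s2, _⟩ := hG ω hω
  rw [Hn, Sprod_one]
  refine (nrm_mul _ _).trans ?_
  exact mul_le_mul (nrm_le (hA ω)) (nrm_le (proj_entry s2)) (nrm_nonneg _)
    ((nrm_nonneg _).trans (nrm_le (hA ω)))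

lemma le_lnplus (x : ℝ) : Real.log x ≤ lnplus x := le_max_left _ _
lemma lnplus_nonneg (x : ℝ) : 0 ≤ lnplus x := le_max_right _ _
lemma neg_le_lnminus (x : ℝ) : -Real.log x ≤ lnminus x := le_max_left _ _
lemma lnminus_nonneg (x : ℝ) : 0 ≤ lnminus x := le_max_right _ _

theorem lyap [MeasurableSpace Ω] {μ : Measure Ω} [IsProbabilityMeasure μ]
    (hN : 2 ≤ N) (herg : Ergodic (θ : Ω → Ω) μ)
    (hSm : ∀ i j, Measurable fun ω => S ω i j) (hw : Measurable w)
    (hinv : ∀ ω, ω ∈ Ω1 ↔ θ ω ∈ Ω1) (hae : ∀ᵐ ω ∂μ, ω ∈ Ω1)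
    (hG : ∀ ω ∈ Ω1, Gd θ S i0 δ w ws ω) {a A : Ω → ℝ} (ha : ∀ ω, 0 < a ω)
    (haS : ∀ ω j, a ω ≤ S ω i0 j) (hA0 : ∀ ω, 0 < A ω) (hA : ∀ ω i j, |S ω i j| ≤ A ω)
    (hai : Integrable (fun ω => lnminus (a ω)) μ) (hAi : Integrable (fun ω => lnplus (A ω)) μ) :
    ∃ lam : ℝ, ∀ᵐ ω ∂μ, Tendsto (fun n : ℕ => (n : ℝ)⁻¹ * Real.log (En θ S w n ω)) atTop
      (nhds lam) := by
  have hgm : Measurable fun ω => Real.log (En θ S w 1 ω) :=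
    Real.measurable_log.comp (En_meas herg.measurable hSm hw 1)
  have hgi : Integrable (fun ω => Real.log (En θ S w 1 ω)) μ := by
    refine Integrable.mono' ((hai.add hAi).add (integrable_const (Real.log (N * N : ℝ))))
      hgm.aestronglyMeasurable ?_
    filter_upwards [hae] with ω hω
    have hN' : (2 : ℝ) ≤ N := by exact_mod_cast hN
    have hl : 0 ≤ Real.log (N * N : ℝ) := Real.log_nonneg (by nlinarith)
    have e1 := Real.log_le_log (ha ω) (En_one_lower hG ha haS hω)
    have e2 := Real.log_le_log (En_pos hinv hG 1 hω) (En_one_upper hG hA hω)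
    rw [← mul_assoc, Real.log_mul (by positivity) (hA0 ω).ne'] at e2
    have e3 := le_lnplus (A ω)
    have e4 := neg_le_lnminus (a ω)
    have e5 := lnplus_nonneg (A ω)
    have e6 := lnminus_nonneg (a ω)
    simp only [Pi.add_apply]
    rw [Real.norm_eq_abs, abs_le]
    constructor <;> linarith
  refine ⟨∫ ω, Real.log (En θ S w 1 ω) ∂μ, ?_⟩
  filter_upwards [birkhoff herg hgm hgi, hae] with ω h hω
  refine h.congr fun n => ?_
  rw [log_En hinv hG n hω]

theorem separation [MeasurableSpace Ω] {μ : Measure Ω} [IsProbabilityMeasure μ]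
    (hN : 2 ≤ N) (herg : Ergodic (θ : Ω → Ω) μ)
    (hSm : ∀ i j, Measurable fun ω => S ω i j) (hw : Measurable w) (hws : Measurable ws)
    (h0 : ∀ ω i j, 0 ≤ S ω i j) (hinj : ∀ ω u, S ω *ᵥ u = 0 → u = 0)
    (hΩm : MeasurableSet Ω1) (hδ : 0 < δ)
    (hinv : ∀ ω, ω ∈ Ω1 ↔ θ ω ∈ Ω1) (hae : ∀ᵐ ω ∂μ, ω ∈ Ω1)
    (hG : ∀ ω ∈ Ω1, Gd θ S i0 δ w ws ω) {a A : Ω → ℝ} (ha : ∀ ω, 0 < a ω)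
    (haS : ∀ ω j, a ω ≤ S ω i0 j) (hA0 : ∀ ω, 0 < A ω) (hA : ∀ ω i j, |S ω i j| ≤ A ω)
    (hai : Integrable (fun ω => lnminus (a ω)) μ) (hAi : Integrable (fun ω => lnplus (A ω)) μ) :
    ∃ c : EReal, c < 0 ∧ ∀ᵐ ω ∂μ, Tendsto (fun n : ℕ => (((n : ℝ)⁻¹ *
      (Real.log (Hn θ S ws n ω) - Real.log (En θ S w n ω)) : ℝ) : EReal)) atTop (nhds c) := by
  set f : ℕ → Ω → ℝ := fun n =>
    Ω1.indicator fun ω => Real.log (Hn θ S ws n ω) - Real.log (En θ S w n ω) with hf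
  have hfm : ∀ n, Measurable (f n) := fun n => by
    refine Measurable.indicator ?_ hΩm
    exact (Real.measurable_log.comp (Hn_meas herg.measurable hSm hws n)).sub
      (Real.measurable_log.comp (En_meas herg.measurable hSm hw n))
  have hf1 : ∀ n ω, ω ∈ Ω1 → f n ω = Real.log (Hn θ S ws n ω) - Real.log (En θ S w n ω) :=
    fun n ω h => Set.indicator_of_mem h _
  have hf2 : ∀ n ω, ω ∉ Ω1 → f n ω = 0 := fun n ω h => Set.indicator_of_notMem h _
  have hgm : Measurable fun ω => max (f 1 ω) 0 := (hfm 1).max measurable_const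
  have hgi : Integrable (fun ω => max (f 1 ω) 0) μ := by
    refine Integrable.mono' ((hai.add hAi).add
      (integrable_const (Real.log (N * N * (N * (N * 2)) : ℝ))))
      hgm.aestronglyMeasurable ?_
    filter_upwards [hae] with ω hω
    have hN' : (2 : ℝ) ≤ N := by exact_mod_cast hN
    have hl : 0 ≤ Real.log (N * N * (N * (N * 2)) : ℝ) := by
      refine Real.log_nonneg ?_
      have h1 : (1 : ℝ) ≤ N * N := by nlinarith
      have h2 : (1 : ℝ) ≤ N * (N * 2) := by nlinarith
      nlinarith
    have e1 := Real.log_le_log (ha ω) (En_one_lower hG ha haS hω)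
    have e2 := Real.log_le_log (Hn_pos hN hinj hG 1 hω) (Hn_one_upper hG hA hω)
    have e7 : (N * (N * A ω)) * (N * (N * 2)) = (N * N * (N * (N * 2)) : ℝ) * A ω := by ring
    rw [e7, Real.log_mul (by positivity) (hA0 ω).ne'] at e2
    have e3 := le_lnplus (A ω)
    have e4 := neg_le_lnminus (a ω)
    have e5 := lnplus_nonneg (A ω)
    have e6 := lnminus_nonneg (a ω)
    simp only [Pi.add_apply]
    rw [Real.norm_eq_abs, abs_of_nonneg (le_max_right _ _), hf1 1 ω hω]
    exact max_le (by linarith) (by linarith)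
  have hsub : ∀ n m ω, 1 ≤ n → 1 ≤ m → f (n + m) ω ≤ f n ω + f m ((θ : Ω → Ω)^[n] ω) := by
    intro n m ω _ _
    by_cases hω : ω ∈ Ω1
    · have hω' := iter_mem hinv n ω hω
      rw [hf1 _ _ hω, hf1 _ _ hω, hf1 _ _ hω', En_add hinv hG n m hω,
        Real.log_mul (En_pos hinv hG n hω).ne' (En_pos hinv hG m hω').ne']
      have := Real.log_le_log (Hn_pos hN hinj hG (n + m) hω) (Hn_sub hinv hG n m hω)
      rw [Real.log_mul (Hn_pos hN hinj hG n hω).ne' (Hn_pos hN hinj hG m hω').ne'] at this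
      linarith
    · have hω' : (θ : Ω → Ω)^[n] ω ∉ Ω1 := by
        clear_value f
        induction n generalizing ω with
        | zero => exact hω
        | succ n ih =>
          rw [Function.iterate_succ_apply']
          intro hc
          have hc' := (hinv _).2 hc
          cases n with
          | zero => exact hω hc'
          | succ n => exact ih ω (by omega) hω hc'
      rw [hf2 _ _ hω, hf2 _ _ hω, hf2 _ _ hω', add_zero]
  obtain ⟨c, hc⟩ := kingman herg hfm hgm hgi (fun ω => le_max_left _ _) hsub
  refine ⟨c, ?_, ?_⟩
  · obtain ⟨ω, hω, hω1⟩ := (hc.and hae).exists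
    obtain ⟨K, hK, hev⟩ := Hn_decay h0 hG hω1
    have hle : c ≤ ((-δ : ℝ) : EReal) := by
      have ht : Tendsto (fun n : ℕ => (n : ℝ)⁻¹ * Real.log K - δ) atTop (nhds (0 * Real.log K - δ)) :=
        ((tendsto_inv_atTop_zero.comp tendsto_natCast_atTop_atTop).mul_const _).sub_const _
      rw [zero_mul, zero_sub] at ht
      refine le_of_tendsto_of_tendsto hω ((continuous_coe_real_ereal.tendsto _).comp ht) ?_
      filter_upwards [hev, eventually_ge_atTop 1] with n hn hn1
      simp only [Function.comp]
      rw [EReal.coe_le_coe_iff, hf1 n ω hω1]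
      have hE := En_pos hinv hG n hω1
      have := Real.log_le_log (Hn_pos hN hinj hG n hω1) hn
      rw [Real.log_mul (mul_pos hK (Real.exp_pos _)).ne' hE.ne',
        Real.log_mul hK.ne' (Real.exp_pos _).ne', Real.log_exp] at this
      have hn0 : (0 : ℝ) < n := by exact_mod_cast hn1
      calc (n : ℝ)⁻¹ * (Real.log (Hn θ S ws n ω) - Real.log (En θ S w n ω)) ≤
          (n : ℝ)⁻¹ * (Real.log K + -δ * n) := by gcongr; linarith
        _ = _ := by field_simp; ring
    refine hle.trans_lt ?_
    exact_mod_cast neg_neg_of_pos hδ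
  · filter_upwards [hc, hae] with ω h hω
    refine h.congr fun n => ?_
    rw [hf1 n ω hω]

lemma transfer (hN : 2 ≤ N) (hinj : ∀ ω u, S ω *ᵥ u = 0 → u = 0)
    (hG : ∀ ω ∈ Ω1, Gd θ S i0 δ w ws ω) {ω : Ω} (hω : ω ∈ Ω1) {c : EReal}
    (h : Tendsto (fun n : ℕ => (((n : ℝ)⁻¹ *
      (Real.log (Hn θ S ws n ω) - Real.log (En θ S w n ω)) : ℝ) : EReal)) atTop (nhds c)) :
    Tendsto (fun n : ℕ => (((n : ℝ)⁻¹ *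
      (Real.log (restrNorm (Sprod θ S n ω) {u : Fin N → ℝ | ∑ i, u i * ws ω i = 0}) -
        Real.log (En θ S w n ω)) : ℝ) : EReal)) atTop (nhds c) := by
  set R : ℕ → ℝ := fun n => restrNorm (Sprod θ S n ω) {u : Fin N → ℝ | ∑ i, u i * ws ω i = 0}
    with hR
  obtain ⟨C, hC⟩ := nrm_le_restr (hG ω hω).2.2.2.1
  have h1 : ∀ n, R n ≤ Hn θ S ws n ω := fun n => restr_le _ _
  have h2 : ∀ n, Hn θ S ws n ω ≤ C * R n := fun n => hC _
  have hRn : ∀ n, 0 ≤ R n := by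
    intro n
    refine Real.sSup_nonneg ?_
    rintro x ⟨u, _, _, rfl⟩
    exact enorm_nonneg _
  have hHp : ∀ n, 0 < Hn θ S ws n ω := fun n => Hn_pos hN hinj hG n hω
  have hRp : ∀ n, 0 < R n := by
    intro n
    refine (hRn n).lt_of_ne fun h => ?_
    have a := h2 n
    rw [← h, mul_zero] at a
    exact absurd (hHp n) (not_lt.2 a)
  have hCp : 0 < C := by
    have := (hHp 0).trans_le (h2 0)
    exact pos_of_mul_pos_left this (hRn 0)
  have ht : Tendsto (fun n : ℕ => (n : ℝ)⁻¹ * (Real.log (R n) - Real.log (Hn θ S ws n ω)))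
      atTop (nhds 0) := by
    have hz : Tendsto (fun n : ℕ => (n : ℝ)⁻¹ * (-Real.log C)) atTop (nhds (0 * (-Real.log C))) :=
      (tendsto_inv_atTop_zero.comp tendsto_natCast_atTop_atTop).mul_const _
    rw [zero_mul] at hz
    refine tendsto_of_tendsto_of_tendsto_of_le_of_le hz tendsto_const_nhds (fun n => ?_)
      (fun n => ?_)
    · have := Real.log_le_log (hHp n) (h2 n)
      rw [Real.log_mul hCp.ne' (hRp n).ne'] at this
      exact mul_le_mul_of_nonneg_left (by linarith) (by positivity)
    · have := Real.log_le_log (hRp n) (h1 n)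
      exact mul_nonpos_of_nonneg_of_nonpos (by positivity) (by linarith)
  have hs := (EReal.continuousAt_add (p := (((0 : ℝ) : EReal), c)) (by simp) (by simp)).tendsto.comp
    (((continuous_coe_real_ereal.tendsto _).comp ht).prodMk_nhds h)
  simp only [EReal.coe_zero, zero_add] at hs
  refine hs.congr fun n => ?_
  simp only [Function.comp]
  rw [← EReal.coe_add, ← mul_add]
  congr 2
  ring

lemma limsup_le (h0 : ∀ ω i j, 0 ≤ S ω i j) (hinj : ∀ ω u, S ω *ᵥ u = 0 → u = 0)
    (hinv : ∀ ω, ω ∈ Ω1 ↔ θ ω ∈ Ω1) (hG : ∀ ω ∈ Ω1, Gd θ S i0 δ w ws ω)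
    {ω : Ω} (hω : ω ∈ Ω1) {lam : ℝ}
    (h : Tendsto (fun n : ℕ => (n : ℝ)⁻¹ * Real.log (En θ S w n ω)) atTop (nhds lam))
    {u : Fin N → ℝ} (hu : u ≠ 0) :
    limsup (fun n : ℕ => (((n : ℝ)⁻¹ *
      Real.log (enorm' ((Sprod θ S n ω).mulVec u)) : ℝ) : EReal)) atTop ≤ (lam : EReal) := by
  have w1 := (hG ω hω).1
  have hup := enorm_pos hu
  obtain ⟨C, hCp, hC⟩ : ∃ C : ℝ, 0 < C ∧ ∀ i, |u i| ≤ C * w ω i := by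
    refine ⟨(∑ i, |u i| / w ω i) + 1, ?_, fun i => ?_⟩
    · have : 0 ≤ ∑ i, |u i| / w ω i :=
        Finset.sum_nonneg fun i _ => div_nonneg (abs_nonneg _) (w1 i).le
      linarith
    · rw [← div_le_iff₀ (w1 i)]
      have := Finset.single_le_sum (f := fun i => |u i| / w ω i)
        (fun i _ => div_nonneg (abs_nonneg _) (w1 i).le) (Finset.mem_univ i)
      linarith
  have hb : ∀ n, enorm' (Sprod θ S n ω *ᵥ u) ≤ C * En θ S w n ω := by
    intro n
    have hM := Sprod_nonneg (θ := θ) h0 n ω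
    rw [En, ← abs_of_pos hCp, ← enorm_smul, ← Matrix.mulVec_smul]
    refine enorm_mono fun i => ?_
    refine le_trans ?_ (le_abs_self _)
    simp only [Matrix.mulVec, dotProduct, Pi.smul_apply, smul_eq_mul]
    refine (Finset.abs_sum_le_sum_abs _ _).trans (Finset.sum_le_sum fun k _ => ?_)
    rw [abs_mul, abs_of_nonneg (hM i k)]
    exact mul_le_mul_of_nonneg_left (hC k) (hM i k)
  have ht : Tendsto (fun n : ℕ => (n : ℝ)⁻¹ * Real.log C + (n : ℝ)⁻¹ * Real.log (En θ S w n ω))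
      atTop (nhds (0 * Real.log C + lam)) :=
    ((tendsto_inv_atTop_zero.comp tendsto_natCast_atTop_atTop).mul_const _).add h
  rw [zero_mul, zero_add] at ht
  have ht' := (continuous_coe_real_ereal.tendsto _).comp ht
  rw [← ht'.limsup_eq]
  refine limsup_le_limsup (Eventually.of_forall fun n => ?_)
  simp only [Function.comp]
  rw [EReal.coe_le_coe_iff, ← mul_add]
  refine mul_le_mul_of_nonneg_left ?_ (by positivity)
  rw [← Real.log_mul hCp.ne' (En_pos hinv hG n hω).ne']
  exact Real.log_le_log (enorm_pos fun h => hu (Sprod_inj hinj n ω u h)) (hb n)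

end limits
end LeslieAux

/-- Random Leslie matrices: principal Floquet subspaces, finite
principal Lyapunov exponent, and generalized exponential separation. -/
theorem stmt_11 {N : ℕ} (hN : 2 ≤ N)
    {Ω : Type*} [MeasurableSpace Ω] (ℙ : Measure Ω) [IsProbabilityMeasure ℙ]
    (θ : Equiv.Perm Ω) (hθmeas : Measurable θ) (hθinvmeas : Measurable θ.symm)
    (hθmp : MeasurePreserving θ ℙ ℙ) (hθerg : Ergodic (θ : Ω → Ω) ℙ)
    (S : Ω → Matrix (Fin N) (Fin N) ℝ)
    (hSmeas : ∀ i j, Measurable fun ω => S ω i j)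
    (m b : Ω → Fin N → ℝ)
    (hLeslie : ∀ ω i j, S ω i j =
      if (i : ℕ) = 0 then m ω j
      else if (i : ℕ) = (j : ℕ) + 1 then b ω j else 0)
    (hmpos : ∀ ω j, 0 < m ω j)
    (hbpos : ∀ ω (j : Fin N), (j : ℕ) + 1 < N → 0 < b ω j)
    (hm0 : Integrable (fun ω => lnminus
      (min (⨅ j, m ω j) (⨅ j : {j : Fin N // (j : ℕ) + 1 < N}, b ω j.1))) ℙ)
    (hM0 : Integrable (fun ω => lnplus
      (max (⨆ j, m ω j) (⨆ j : {j : Fin N // (j : ℕ) + 1 < N}, b ω j.1))) ℙ) :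
    -- all entries of the N-fold product are strictly positive
    (∀ ω i j, 0 < Sprod θ S N ω i j) ∧
    ∃ Ω1 : Set Ω, MeasurableSet Ω1 ∧ (∀ ω, ω ∈ Ω1 ↔ θ ω ∈ Ω1) ∧ ℙ Ω1 = 1 ∧
      ∃ w ws : Ω → Fin N → ℝ, Measurable w ∧ Measurable ws ∧
        (∀ ω ∈ Ω1, (∀ i, 0 < w ω i) ∧ enorm' (w ω) = 1 ∧
          (∀ i, 0 < ws ω i) ∧ enorm' (ws ω) = 1) ∧
        ∃ F : Ω → Set (Fin N → ℝ),
          (∀ ω, F ω = {u : Fin N → ℝ | ∑ i, u i * ws ω i = 0}) ∧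
          ∃ lam : ℝ, ∃ σ : EReal, 0 < σ ∧
            -- (i)
            (∀ ω ∈ Ω1, (fun u => (S ω).mulVec u) ''
                ((Submodule.span ℝ {w ω} : Submodule ℝ (Fin N → ℝ)) : Set (Fin N → ℝ)) =
              ((Submodule.span ℝ {w (θ ω)} : Submodule ℝ (Fin N → ℝ)) : Set (Fin N → ℝ))) ∧
            (∀ ω ∈ Ω1, (fun u => (S ω).mulVec u) '' F ω = F (θ ω)) ∧
            -- (ii)
            (∀ ω ∈ Ω1, F ω ∩ {u : Fin N → ℝ | ∀ i, 0 ≤ u i} = {0}) ∧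
            -- (iii)
            (∀ ω ∈ Ω1, Tendsto (fun n : ℕ => (n : ℝ)⁻¹ *
                Real.log (enorm' ((Sprod θ S n ω).mulVec (w ω)))) atTop (nhds lam)) ∧
            (∀ ω ∈ Ω1, ∀ u : Fin N → ℝ, u ≠ 0 →
              limsup (fun n : ℕ => (((n : ℝ)⁻¹ *
                Real.log (enorm' ((Sprod θ S n ω).mulVec u))) : EReal)) atTop
                ≤ (lam : EReal)) ∧
            -- (iv)
            (∀ ω ∈ Ω1, Tendsto (fun n : ℕ => (((n : ℝ)⁻¹ *
                (Real.log (restrNorm (Sprod θ S n ω) (F ω)) -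
                 Real.log (enorm' ((Sprod θ S n ω).mulVec (w ω))))) : EReal))
                atTop (nhds (-σ))) := by
  have hN0 : 0 < N := by omega
  set i0 : Fin N := ⟨0, hN0⟩ with hi0
  have hrow : ∀ ω j, S ω i0 j = m ω j := fun ω j => by rw [hLeslie]; simp [hi0]
  have hsubd : ∀ ω (i j : Fin N), (i : ℕ) = j + 1 → S ω i j = b ω j := fun ω i j h => by
    rw [hLeslie, if_neg (by omega), if_pos h]
  have hzero : ∀ ω (i j : Fin N), (i : ℕ) ≠ 0 → (i : ℕ) ≠ j + 1 → S ω i j = 0 :=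
    fun ω i j h h' => by rw [hLeslie, if_neg h, if_neg h']
  have hcases : ∀ ω (i j : Fin N), S ω i j = m ω j ∨ (∃ _ : (j : ℕ) + 1 < N, S ω i j = b ω j) ∨
      S ω i j = 0 := by
    intro ω i j
    by_cases h : (i : ℕ) = 0
    · left
      have : i = i0 := by ext; exact h
      rw [this, hrow]
    · by_cases h' : (i : ℕ) = j + 1
      · right; left
        exact ⟨by have := i.2; omega, hsubd ω i j h'⟩
      · right; right; exact hzero ω i j h h'
  have hrowp : ∀ ω j, 0 < S ω i0 j := fun ω j => by rw [hrow]; exact hmpos ω j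
  have hsubp : ∀ ω (i j : Fin N), (i : ℕ) = j + 1 → 0 < S ω i j := fun ω i j h => by
    rw [hsubd ω i j h]; exact hbpos ω j (by have := i.2; omega)
  have h0 : ∀ ω i j, 0 ≤ S ω i j := by
    intro ω i j
    rcases hcases ω i j with h | ⟨h', h⟩ | h
    · rw [h]; exact (hmpos ω j).le
    · rw [h]; exact (hbpos ω j h').le
    · rw [h]
  have hr : ∀ ω i, ∃ j, 0 < S ω i j := by
    intro ω i
    by_cases h : (i : ℕ) = 0
    · have : i = i0 := by ext; exact h
      exact ⟨i0, by rw [this]; exact hrowp ω i0⟩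
    · exact ⟨⟨i - 1, by have := i.2; omega⟩, hsubp ω _ _ (by simp only; omega)⟩
  have hc : ∀ ω j, ∃ i, 0 < S ω i j := fun ω j => ⟨i0, hrowp ω j⟩
  have hinj : ∀ ω u, S ω *ᵥ u = 0 → u = 0 := by
    intro ω u h
    have h1 : ∀ j : Fin N, (j : ℕ) + 1 < N → u j = 0 := by
      intro j hj
      have e := congrFun h ⟨j + 1, hj⟩
      rw [Matrix.mulVec, dotProduct, Finset.sum_eq_single j] at e
      · exact (mul_eq_zero.1 e).resolve_left (hsubp ω _ j rfl).ne'
      · intro k _ hk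
        rw [hzero ω _ k (by simp) (by simp only; intro hc; apply hk; ext; omega), zero_mul]
      · intro hj; exact absurd (Finset.mem_univ j) hj
    ext j
    by_cases hj : (j : ℕ) + 1 < N
    · exact h1 j hj
    · have e := congrFun h i0
      rw [Matrix.mulVec, dotProduct, Finset.sum_eq_single j] at e
      · exact (mul_eq_zero.1 e).resolve_left (hrowp ω j).ne'
      · intro k _ hk
        rw [h1 k, mul_zero]
        have h2 : (k : ℕ) ≠ j := fun hc => hk (by ext; exact hc)
        have := k.2; have := j.2; omega
      · intro hj; exact absurd (Finset.mem_univ j) hj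
  have hsurj : ∀ ω y, ∃ u, S ω *ᵥ u = y := by
    intro ω
    have hi : Function.Injective (Matrix.mulVecLin (S ω)) := by
      rw [← LinearMap.ker_eq_bot, LinearMap.ker_eq_bot']
      intro u hu
      exact hinj ω u hu
    exact LinearMap.surjective_of_injective hi
  have hpos : ∀ ω i j, 0 < Sprod θ S N ω i j := fun ω i j =>
    LeslieAux.Sprod_pos h0 hN0 hrowp hsubp N ω i j (Or.inl i.2)
  refine ⟨hpos, ?_⟩
  have herg' : Ergodic (θ.symm : Ω → Ω) ℙ := by
    let e : Ω ≃ᵐ Ω := ⟨θ, hθmeas, hθinvmeas⟩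
    exact Ergodic.symm (e := e) hθerg
  obtain ⟨e, rfl⟩ : ∃ e, N = e + 1 := ⟨N - 1, by omega⟩
  obtain ⟨δ, hδ, w, ws, hw, hws, Ω0, hΩm, hinv, hP, hG⟩ :=
    LeslieAux.exists_good θ hθmeas hθinvmeas hθerg herg' S hSmeas h0 hr hc hpos i0
  have hae : ∀ᵐ ω ∂ℙ, ω ∈ Ω0 := (mem_ae_iff_prob_eq_one hΩm).2 hP
  set a : Ω → ℝ := fun ω => min (⨅ j, m ω j)
    (⨅ j : {j : Fin (e + 1) // (j : ℕ) + 1 < e + 1}, b ω j.1) with ha_def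
  set A : Ω → ℝ := fun ω => max (⨆ j, m ω j)
    (⨆ j : {j : Fin (e + 1) // (j : ℕ) + 1 < e + 1}, b ω j.1) with hA_def
  have hne : Nonempty {j : Fin (e + 1) // (j : ℕ) + 1 < e + 1} := ⟨⟨i0, by simp [hi0]; omega⟩⟩
  have ha : ∀ ω, 0 < a ω := by
    intro ω
    refine lt_min ?_ ?_
    · obtain ⟨j, hj⟩ := exists_eq_ciInf_of_finite (f := fun j => m ω j)
      rw [← hj]; exact hmpos ω j
    · obtain ⟨j, hj⟩ := exists_eq_ciInf_of_finite
        (f := fun j : {j : Fin (e + 1) // (j : ℕ) + 1 < e + 1} => b ω j.1)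
      rw [← hj]; exact hbpos ω j.1 j.2
  have haS : ∀ ω j, a ω ≤ S ω i0 j := fun ω j => by
    rw [hrow]
    exact (min_le_left _ _).trans (ciInf_le (Set.finite_range _).bddBelow j)
  have hmA : ∀ ω j, m ω j ≤ A ω := fun ω j =>
    (le_ciSup (f := fun j => m ω j) (Set.finite_range _).bddAbove j).trans (le_max_left _ _)
  have hA0 : ∀ ω, 0 < A ω := fun ω => (hmpos ω i0).trans_le (hmA ω i0)
  have hA : ∀ ω i j, |S ω i j| ≤ A ω := by
    intro ω i j
    rw [abs_of_nonneg (h0 ω i j)]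
    rcases hcases ω i j with h | ⟨h', h⟩ | h
    · rw [h]; exact hmA ω j
    · rw [h]
      exact (le_ciSup (f := fun j : {j : Fin (e + 1) // (j : ℕ) + 1 < e + 1} => b ω j.1)
        (Set.finite_range _).bddAbove ⟨j, h'⟩).trans (le_max_right _ _)
    · rw [h]; exact (hA0 ω).le
  obtain ⟨lam, hlam⟩ := LeslieAux.lyap hN hθerg hSmeas hw hinv hae hG ha haS hA0 hA hm0 hM0
  obtain ⟨c, hc0, hcl⟩ := LeslieAux.separation hN hθerg hSmeas hw hws h0 hinj hΩm hδ hinv hae hG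
    ha haS hA0 hA hm0 hM0
  obtain ⟨Ω1, hm1, hinv1, hP1, hG1⟩ := LeslieAux.inv_set θ hθinvmeas hθmp
    herg'.toMeasurePreserving (hae.and (hlam.and hcl))
  refine ⟨Ω1, hm1, hinv1, hP1, w, ws, hw, hws, ?_, _, fun ω => rfl, lam, -c, ?_, ?_, ?_, ?_, ?_,
    ?_, ?_⟩
  · intro ω hω
    obtain ⟨g1, g2, g3, g4, _⟩ := hG ω (hG1 ω hω).1
    exact ⟨g1, g2, g3, g4⟩
  · rw [EReal.lt_neg_comm, neg_zero]; exact hc0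
  · intro ω hω
    obtain ⟨r, hr, e1⟩ := (hG ω (hG1 ω hω).1).2.2.2.2.1
    ext y
    simp only [Set.mem_image, SetLike.mem_coe, Submodule.mem_span_singleton]
    constructor
    · rintro ⟨_, ⟨t, rfl⟩, rfl⟩
      exact ⟨t * r, by rw [Matrix.mulVec_smul, e1, smul_smul]⟩
    · rintro ⟨t, rfl⟩
      exact ⟨_, ⟨t / r, rfl⟩, by rw [Matrix.mulVec_smul, e1, smul_smul, div_mul_cancel₀ _ hr.ne']⟩
  · intro ω hω
    obtain ⟨r, hr, e1⟩ := (hG ω (hG1 ω hω).1).2.2.2.2.2.1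
    have key : ∀ u, ∑ i, (S ω *ᵥ u) i * ws (θ ω) i = r * ∑ i, u i * ws ω i := by
      intro u
      have h1 : ws (θ ω) ⬝ᵥ (S ω *ᵥ u) = r * (ws ω ⬝ᵥ u) := by
        rw [Matrix.dotProduct_mulVec, e1, smul_dotProduct, smul_eq_mul]
      rw [dotProduct_comm, dotProduct_comm (ws ω)] at h1
      exact h1
    ext y
    constructor
    · rintro ⟨u, hu, rfl⟩
      have hu' : ∑ i, u i * ws ω i = 0 := hu
      change ∑ i, (S ω *ᵥ u) i * ws (θ ω) i = 0
      rw [key, hu', mul_zero]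
    · intro hy
      obtain ⟨u, rfl⟩ := hsurj ω y
      have hy' : ∑ i, (S ω *ᵥ u) i * ws (θ ω) i = 0 := hy
      rw [key] at hy'
      exact ⟨u, (mul_eq_zero.1 hy').resolve_left hr.ne', rfl⟩
  · intro ω hω
    have g3 := (hG ω (hG1 ω hω).1).2.2.1
    ext u
    constructor
    · rintro ⟨hu, hu0⟩
      have hu' : ∑ i, u i * ws ω i = 0 := hu
      have hu0' : ∀ i, 0 ≤ u i := hu0
      rw [Finset.sum_eq_zero_iff_of_nonneg fun i _ => mul_nonneg (hu0' i) (g3 i).le] at hu'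
      refine Set.mem_singleton_iff.2 (funext fun i => ?_)
      exact (mul_eq_zero.1 (hu' i (Finset.mem_univ i))).resolve_right (g3 i).ne'
    · intro hu
      rw [Set.mem_singleton_iff.1 hu]
      refine ⟨?_, ?_⟩
      · change ∑ i, (0 : Fin (e + 1) → ℝ) i * ws ω i = 0
        simp
      · change ∀ i, 0 ≤ (0 : Fin (e + 1) → ℝ) i
        simp
  · intro ω hω
    exact (hG1 ω hω).2.1
  · intro ω hω u hu
    have := LeslieAux.limsup_le h0 hinj hinv hG (hG1 ω hω).1 (hG1 ω hω).2.1 hu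
    push_cast at this
    exact this
  · intro ω hω
    have := LeslieAux.transfer hN hinj hG (hG1 ω hω).1 (hG1 ω hω).2.2
    rw [neg_neg]
    push_cast at this
    exact this
end
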